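/- arXiv:quant-ph/0505001 — 3 statements merged into one kernel-verified Lean document; each statement's English description precedes it below -/
import Mathlib

section
/- Consider a quantum secret sharing scheme W_N on shares N = {1,…,n} encoding states on H, realized as a pure-state scheme. Suppose X, Y ⊆ N are disjoint, X ∪ Y is qualified (W_{X∪Y} is reversible on all states) and Y is forbidden (W_Y is constant on all states). Then for every probability measure μ supported on pure states of H with barycenter σ_μ, one has H(σ_μ) ≤ H(W_X(σ_μ)) − E_μ[H_ρ(W_X | W_Y)], where H_ρ(W_X|W_Y) = H(W_{X∪Y}(ρ)) − H(W_Y(ρ)). -/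
open Matrix
open scoped ComplexOrder

noncomputable section

/-- A density operator: positive semidefinite with unit trace. -/
def IsDensity {n : Type*} [Fintype n] (ρ : Matrix n n ℂ) : Prop :=
  ρ.PosSemidef ∧ ρ.trace = 1

/-- A pure state: a density operator that is a (rank-one) projection. -/
def IsPure {n : Type*} [Fintype n] (ρ : Matrix n n ℂ) : Prop :=
  IsDensity ρ ∧ ρ * ρ = ρ

/-- A quantum channel (CPTP map), characterized by a Kraus representation. -/
def IsCPTP {n m : Type*} [Fintype n] [DecidableEq n] [Fintype m]
    (E : Matrix n n ℂ →ₗ[ℂ] Matrix m m ℂ) : Prop :=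
  ∃ (N : ℕ) (K : Fin N → Matrix m n ℂ),
    (∀ ρ, E ρ = ∑ a, K a * ρ * (K a)ᴴ) ∧ ∑ a, (K a)ᴴ * K a = 1

/-- The von Neumann entropy `H(ρ) = -Tr[ρ log ρ]`, via the eigenvalues. -/
def vnEntropy {n : Type*} [Fintype n] [DecidableEq n] (ρ : Matrix n n ℂ) : ℝ :=
  if h : ρ.IsHermitian then ∑ i, Real.negMulLog (h.eigenvalues i) else 0

/-- The matrix (spectral) logarithm of a Hermitian matrix. -/
def matLog {n : Type*} [Fintype n] [DecidableEq n] (ρ : Matrix n n ℂ) : Matrix n n ℂ :=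
  if h : ρ.IsHermitian then
    (h.eigenvectorUnitary : Matrix n n ℂ) *
      diagonal (fun i => (Real.log (h.eigenvalues i) : ℂ)) *
      star (h.eigenvectorUnitary : Matrix n n ℂ)
  else 0

/-- The quantum relative entropy `D(ρ‖σ) = Tr[ρ (log ρ - log σ)]`. -/
def relEntropy {n : Type*} [Fintype n] [DecidableEq n] (ρ σ : Matrix n n ℂ) : ℝ :=
  ((ρ * (matLog ρ - matLog σ)).trace).re
variable {nn : ℕ} {d : Fin nn → Type} [∀ i, Fintype (d i)] [∀ i, DecidableEq (d i)]
variable {H : Type} [Fintype H] [DecidableEq H]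

/-- Combine an assignment on a subset `X` of shares with one on its complement. -/
def mergeFun (X : Finset (Fin nn)) (f : (i : {i // i ∈ X}) → d i)
    (z : (i : {i // i ∉ X}) → d i) : (i : Fin nn) → d i :=
  fun i => if h : i ∈ X then f ⟨i, h⟩ else z ⟨i, h⟩

/-- Partial trace onto the subsystem given by the subset `X` of shares
(tracing out the shares in the complement of `X`). -/
def ptraceSubset (X : Finset (Fin nn))
    (M : Matrix ((i : Fin nn) → d i) ((i : Fin nn) → d i) ℂ) :
    Matrix ((i : {i // i ∈ X}) → d i) ((i : {i // i ∈ X}) → d i) ℂ :=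
  fun f g => ∑ z : (i : {i // i ∉ X}) → d i, M (mergeFun X f z) (mergeFun X g z)

/-- A subset `X` of shares is qualified: the reduced channel `W_X` is reversible on all
density operators, i.e. the original state can be perfectly recovered from `X`. -/
def Qualified (W : Matrix H H ℂ →ₗ[ℂ] Matrix ((i : Fin nn) → d i) ((i : Fin nn) → d i) ℂ)
    (X : Finset (Fin nn)) : Prop :=
  ∃ R : Matrix ((i : {i // i ∈ X}) → d i) ((i : {i // i ∈ X}) → d i) ℂ →ₗ[ℂ] Matrix H H ℂ,
    IsCPTP R ∧ ∀ ρ : Matrix H H ℂ, IsDensity ρ → R (ptraceSubset X (W ρ)) = ρ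

/-- A subset `X` of shares is forbidden: the reduced channel `W_X` is vanishing
(constant) on all density operators, i.e. `X` has no information on the state. -/
def Forbidden (W : Matrix H H ℂ →ₗ[ℂ] Matrix ((i : Fin nn) → d i) ((i : Fin nn) → d i) ℂ)
    (X : Finset (Fin nn)) : Prop :=
  ∃ ρ₀, IsDensity ρ₀ ∧ ∀ ρ : Matrix H H ℂ, IsDensity ρ → ptraceSubset X (W ρ) = ρ₀

/-- A `(k, L, n)`-threshold ramp quantum secret sharing scheme: a channel from states
on `H` into the `n`-share system such that a subset `X` is qualified iff `|X| ≥ k` and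
forbidden iff `|X| ≤ k - L`. -/
def IsRampQSS (k L : ℕ)
    (W : Matrix H H ℂ →ₗ[ℂ] Matrix ((i : Fin nn) → d i) ((i : Fin nn) → d i) ℂ) : Prop :=
  IsCPTP W ∧
    (∀ X : Finset (Fin nn), Qualified W X ↔ k ≤ X.card) ∧
    (∀ X : Finset (Fin nn), Forbidden W X ↔ X.card ≤ k - L)


/-! ### Entropy lemmas -/

section Entropy

open scoped Kronecker

variable {m n A B : Type*} [Fintype m] [DecidableEq m] [Fintype n] [DecidableEq n]
  [Fintype A] [DecidableEq A] [Fintype B] [DecidableEq B]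

lemma vnEntropy_of_herm {ρ : Matrix n n ℂ} (h : ρ.IsHermitian) :
    vnEntropy ρ = ∑ i, Real.negMulLog (h.eigenvalues i) := by
  simp [vnEntropy, h]

lemma vnEntropy_eq_roots {ρ : Matrix n n ℂ} (h : ρ.IsHermitian) :
    vnEntropy ρ = (ρ.charpoly.roots.map (fun z : ℂ => Real.negMulLog z.re)).sum := by
  rw [vnEntropy_of_herm h, h.roots_charpoly_eq_eigenvalues, Multiset.map_map]
  rfl

lemma vnEntropy_mul_comm (M : Matrix m n ℂ) : vnEntropy (M * Mᴴ) = vnEntropy (Mᴴ * M) := by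
  rw [vnEntropy_eq_roots (isHermitian_mul_conjTranspose_self M),
    vnEntropy_eq_roots (isHermitian_conjTranspose_mul_self M)]
  have h := congrArg (fun P : Polynomial ℂ =>
    (P.roots.map (fun z : ℂ => Real.negMulLog z.re)).sum) (charpoly_mul_comm' M Mᴴ)
  have hX : ∀ k : ℕ, (Polynomial.X ^ k : Polynomial ℂ) ≠ 0 := fun k => pow_ne_zero _ Polynomial.X_ne_zero
  rw [Polynomial.roots_mul (mul_ne_zero (hX _) (charpoly_monic _).ne_zero),
    Polynomial.roots_mul (mul_ne_zero (hX _) (charpoly_monic _).ne_zero)] at h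
  simpa [Multiset.map_nsmul, Multiset.sum_nsmul] using h

lemma vnEntropy_reindex (e : m ≃ n) {ρ : Matrix m m ℂ} (h : ρ.IsHermitian) :
    vnEntropy (reindex e e ρ) = vnEntropy ρ := by
  rw [vnEntropy_eq_roots h, vnEntropy_eq_roots (by simpa using h.submatrix e.symm),
    charpoly_reindex]

lemma spectral_mul {ρ : Matrix n n ℂ} (h : ρ.IsHermitian) :
    ρ = (h.eigenvectorUnitary : Matrix n n ℂ) * diagonal (fun i => (h.eigenvalues i : ℂ)) *
      (h.eigenvectorUnitary : Matrix n n ℂ)ᴴ := by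
  have := h.spectral_theorem
  rw [Unitary.conjStarAlgAut_apply] at this
  exact this

lemma unit_mul_star {ρ : Matrix n n ℂ} (h : ρ.IsHermitian) :
    (h.eigenvectorUnitary : Matrix n n ℂ) * (h.eigenvectorUnitary : Matrix n n ℂ)ᴴ = 1 :=
  Unitary.coe_mul_star_self h.eigenvectorUnitary

lemma star_mul_unit {ρ : Matrix n n ℂ} (h : ρ.IsHermitian) :
    (h.eigenvectorUnitary : Matrix n n ℂ)ᴴ * (h.eigenvectorUnitary : Matrix n n ℂ) = 1 :=
  Unitary.coe_star_mul_self h.eigenvectorUnitary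

lemma vnEntropy_conj_diag (U : Matrix n n ℂ) (hU : Uᴴ * U = 1) (l : n → ℝ) :
    vnEntropy (U * diagonal (fun i => (l i : ℂ)) * Uᴴ) = ∑ i, Real.negMulLog (l i) := by
  have hd : (diagonal (fun i => (l i : ℂ))).IsHermitian :=
    isHermitian_diagonal_of_self_adjoint _ (by ext i; simp)
  rw [vnEntropy_eq_roots (isHermitian_mul_mul_conjTranspose U hd), charpoly_mul_comm, ← mul_assoc, hU, one_mul,
    charpoly_diagonal, Polynomial.roots_prod]
  · simp
  · simp [Finset.prod_ne_zero_iff, Polynomial.X_sub_C_ne_zero]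

lemma sum_eig {ρ : Matrix n n ℂ} (h : ρ.IsHermitian) (ht : ρ.trace = 1) :
    ∑ i, h.eigenvalues i = 1 := by
  have := h.trace_eq_sum_eigenvalues
  rw [ht] at this
  have h2 : ((∑ i, h.eigenvalues i : ℝ) : ℂ) = 1 := by
    push_cast; exact this.symm
  exact_mod_cast h2

lemma vnEntropy_kronecker {ρ : Matrix A A ℂ} {σ : Matrix B B ℂ} (h : ρ.IsHermitian)
    (k : σ.IsHermitian) (ht : ρ.trace = 1) (kt : σ.trace = 1) :
    vnEntropy (ρ ⊗ₖ σ) = vnEntropy ρ + vnEntropy σ := by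
  have e : ρ ⊗ₖ σ = ((h.eigenvectorUnitary : Matrix A A ℂ) ⊗ₖ (k.eigenvectorUnitary : Matrix B B ℂ))
      * diagonal (fun i : A × B => ((h.eigenvalues i.1 * k.eigenvalues i.2 : ℝ) : ℂ)) *
      ((h.eigenvectorUnitary : Matrix A A ℂ) ⊗ₖ (k.eigenvectorUnitary : Matrix B B ℂ))ᴴ := by
    conv_lhs => rw [spectral_mul h, spectral_mul k]
    rw [mul_kronecker_mul, mul_kronecker_mul, diagonal_kronecker_diagonal, conjTranspose_kronecker]
    simp
  rw [e, vnEntropy_conj_diag _ (by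
    rw [conjTranspose_kronecker, ← mul_kronecker_mul, star_mul_unit, star_mul_unit,
      one_kronecker_one]), vnEntropy_of_herm h, vnEntropy_of_herm k, Fintype.sum_prod_type]
  simp only [Real.negMulLog_mul, Finset.sum_add_distrib]
  congr 1
  · simp [← Finset.sum_mul, sum_eig k kt]
  · simp [← Finset.sum_mul, ← Finset.mul_sum, sum_eig h ht]

lemma vnEntropy_pure {ρ : Matrix n n ℂ} (h : IsPure ρ) : vnEntropy ρ = 0 := by
  have hh := h.1.1.isHermitian
  rw [vnEntropy_of_herm hh]
  refine Finset.sum_eq_zero fun i _ => ?_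
  have h1 := hh.mulVec_eigenvectorBasis i
  have h2 : ρ *ᵥ (ρ *ᵥ ⇑(hh.eigenvectorBasis i)) = ρ *ᵥ ⇑(hh.eigenvectorBasis i) := by
    rw [mulVec_mulVec, h.2]
  rw [h1, mulVec_smul, h1, smul_smul] at h2
  have hne : (⇑(hh.eigenvectorBasis i) : n → ℂ) ≠ 0 := by
    intro h0
    apply hh.eigenvectorBasis.orthonormal.ne_zero i
    ext j
    exact congrFun h0 j
  have h3 := smul_left_injective ℝ hne h2
  rcases mul_eq_right₀' h3 with h4 | h4 <;> simp [h4]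
where
  mul_eq_right₀' {x : ℝ} (h : x * x = x) : x = 0 ∨ x = 1 := by
    have : x * (x - 1) = 0 := by linarith
    rcases mul_eq_zero.1 this with h | h
    · exact Or.inl h
    · exact Or.inr (by linarith)

lemma vnEntropy_le_pinch {ρ : Matrix n n ℂ} (h : ρ.PosSemidef) (U : Matrix n n ℂ)
    (hU : Uᴴ * U = 1) (hU' : U * Uᴴ = 1) :
    vnEntropy ρ ≤ ∑ i, Real.negMulLog ((Uᴴ * ρ * U) i i).re := by
  have hh := h.isHermitian
  rw [vnEntropy_of_herm hh]
  set T : Matrix n n ℂ := Uᴴ * (hh.eigenvectorUnitary : Matrix n n ℂ) with hT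
  have hT1 : T * Tᴴ = 1 := by
    rw [hT, conjTranspose_mul, conjTranspose_conjTranspose, mul_assoc, ← mul_assoc _ _ U,
      unit_mul_star, one_mul, hU]
  have hT2 : Tᴴ * T = 1 := by
    rw [hT, conjTranspose_mul, conjTranspose_conjTranspose, mul_assoc, ← mul_assoc U,
      hU', one_mul, star_mul_unit]
  have e : Uᴴ * ρ * U = T * diagonal (fun i => (hh.eigenvalues i : ℂ)) * Tᴴ := by
    conv_lhs => rw [spectral_mul hh]
    simp [hT, mul_assoc]
  have r1 : ∀ i, ∑ k, Complex.normSq (T i k) = 1 := by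
    intro i
    have := congrFun (congrFun hT1 i) i
    simp only [mul_apply, conjTranspose_apply, one_apply_eq, RCLike.star_def, Complex.mul_conj] at this
    exact_mod_cast this
  have r2 : ∀ k, ∑ i, Complex.normSq (T i k) = 1 := by
    intro i
    have := congrFun (congrFun hT2 i) i
    simp only [mul_apply, conjTranspose_apply, one_apply_eq, RCLike.star_def, mul_comm ((starRingEnd ℂ) _),
      Complex.mul_conj] at this
    exact_mod_cast this
  have q : ∀ i, ((Uᴴ * ρ * U) i i).re = ∑ k, Complex.normSq (T i k) • hh.eigenvalues k := by
    intro i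
    rw [e, mul_apply, Complex.re_sum]
    refine Finset.sum_congr rfl fun k _ => ?_
    rw [mul_diagonal, conjTranspose_apply, RCLike.star_def, mul_right_comm, Complex.mul_conj]
    rw [← Complex.ofReal_mul, Complex.ofReal_re, smul_eq_mul]
  calc ∑ k, Real.negMulLog (hh.eigenvalues k)
      = ∑ k, (∑ i, Complex.normSq (T i k)) * Real.negMulLog (hh.eigenvalues k) := by simp [r2]
    _ = ∑ i, ∑ k, Complex.normSq (T i k) • Real.negMulLog (hh.eigenvalues k) := by
        simp only [Finset.sum_mul, smul_eq_mul]; exact Finset.sum_comm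
    _ ≤ _ := by
        refine Finset.sum_le_sum fun i _ => ?_
        rw [q]
        exact Real.concaveOn_negMulLog.le_map_sum (fun k _ => Complex.normSq_nonneg _) (r1 i)
          (fun k _ => h.eigenvalues_nonneg k)

lemma classical_subadd (q : A → B → ℝ) (hq : ∀ i j, 0 ≤ q i j) (h1 : ∑ i, ∑ j, q i j = 1) :
    ∑ i, ∑ j, Real.negMulLog (q i j) ≤
      ∑ i, Real.negMulLog (∑ j, q i j) + ∑ j, Real.negMulLog (∑ i, q i j) := by
  set a : A → ℝ := fun i => ∑ j, q i j with ha
  set b : B → ℝ := fun j => ∑ i, q i j with hb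
  have hA : ∑ i, Real.negMulLog (a i) = ∑ i, ∑ j, (- q i j * Real.log (a i)) := by
    refine Finset.sum_congr rfl fun i _ => ?_
    rw [← Finset.sum_mul, Finset.sum_neg_distrib, Real.negMulLog]
  have hB : ∑ j, Real.negMulLog (b j) = ∑ i, ∑ j, (- q i j * Real.log (b j)) := by
    rw [Finset.sum_comm]
    refine Finset.sum_congr rfl fun i _ => ?_
    rw [← Finset.sum_mul, Finset.sum_neg_distrib, Real.negMulLog]
  have key : ∀ i j, Real.negMulLog (q i j) ≤
      (- q i j * Real.log (a i)) + (- q i j * Real.log (b j)) + (a i * b j - q i j) := by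
    intro i j
    have ha' : q i j ≤ a i := Finset.single_le_sum (fun j _ => hq i j) (Finset.mem_univ j)
    have hb' : q i j ≤ b j :=
      Finset.single_le_sum (f := fun i => q i j) (fun i _ => hq i j) (Finset.mem_univ i)
    rcases (hq i j).eq_or_lt with h0 | h0
    · rw [← h0] at ha' hb' ⊢
      have := mul_nonneg ha' hb'
      simpa using this
    · have ap := h0.trans_le ha'
      have bp := h0.trans_le hb'
      have := Real.log_le_sub_one_of_pos (div_pos (mul_pos ap bp) h0)
      rw [Real.log_div (mul_pos ap bp).ne' h0.ne', Real.log_mul ap.ne' bp.ne'] at this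
      have h2 := mul_le_mul_of_nonneg_left this h0.le
      rw [mul_sub (q i j) (_ / _), mul_div_cancel₀ _ h0.ne'] at h2
      rw [Real.negMulLog]
      nlinarith
  have hs : ∑ i, ∑ j, (a i * b j - q i j) = 0 := by
    have hb1 : ∑ j, b j = 1 := by rw [← h1, hb]; exact Finset.sum_comm
    have ha1 : ∑ i, a i = 1 := h1
    simp only [Finset.sum_sub_distrib, ← Finset.mul_sum, hb1, mul_one]
    rw [ha1, sub_self]
  calc _ ≤ ∑ i, ∑ j, ((- q i j * Real.log (a i)) + (- q i j * Real.log (b j)) + (a i * b j - q i j)) :=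
        Finset.sum_le_sum fun i _ => Finset.sum_le_sum fun j _ => key i j
    _ = _ := by
        rw [hA, hB]
        simp only [Finset.sum_add_distrib]
        rw [hs, add_zero]

lemma marg_left (ρ : Matrix (A × B) (A × B) ℂ) (U : Matrix A A ℂ) (V : Matrix B B ℂ)
    (hV : V * Vᴴ = 1) (i : A) :
    ∑ j, ((U ⊗ₖ V)ᴴ * ρ * (U ⊗ₖ V)) (i, j) (i, j) =
      (Uᴴ * (of fun a a' => ∑ b, ρ (a, b) (a', b)) * U) i i := by
  have hv : ∀ b b', ∑ j, V b' j * star (V b j) = if b' = b then 1 else 0 := by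
    intro b b'
    have := congrFun (congrFun hV b') b
    simpa [mul_apply, one_apply] using this
  calc _ = ∑ j, ∑ a', ∑ b', ∑ a, ∑ b, (star (U a i) * ρ (a, b) (a', b') * U a' i) *
          (V b' j * star (V b j)) := by
        refine Finset.sum_congr rfl fun j _ => ?_
        simp only [mul_apply, Fintype.sum_prod_type, conjTranspose_apply, kroneckerMap_apply,
          Finset.sum_mul, star_mul']
        refine Finset.sum_congr rfl fun a' _ => Finset.sum_congr rfl fun b' _ =>
          Finset.sum_congr rfl fun a _ => Finset.sum_congr rfl fun b _ => by ring
    _ = ∑ a', ∑ b', ∑ a, ∑ b, (star (U a i) * ρ (a, b) (a', b') * U a' i) *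
          ∑ j, (V b' j * star (V b j)) := by
        simp only [Finset.mul_sum]
        rw [Finset.sum_comm]
        refine Finset.sum_congr rfl fun a' _ => ?_
        rw [Finset.sum_comm]
        refine Finset.sum_congr rfl fun b' _ => ?_
        rw [Finset.sum_comm]
        refine Finset.sum_congr rfl fun a _ => ?_
        rw [Finset.sum_comm]
    _ = _ := by
        simp only [hv, mul_ite, mul_one, mul_zero, Finset.sum_ite_eq, Finset.mem_univ, if_true,
          mul_apply, of_apply, conjTranspose_apply, Finset.mul_sum, Finset.sum_mul]
        refine Finset.sum_congr rfl fun a' _ => ?_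
        rw [Finset.sum_comm]

lemma marg_right (ρ : Matrix (A × B) (A × B) ℂ) (U : Matrix A A ℂ) (V : Matrix B B ℂ)
    (hU : U * Uᴴ = 1) (j : B) :
    ∑ i, ((U ⊗ₖ V)ᴴ * ρ * (U ⊗ₖ V)) (i, j) (i, j) =
      (Vᴴ * (of fun b b' => ∑ a, ρ (a, b) (a, b')) * V) j j := by
  have := marg_left (ρ.submatrix Prod.swap Prod.swap) V U hU j
  simp only [submatrix_apply, Prod.swap_prod_mk] at this
  rw [← this]
  refine Finset.sum_congr rfl fun i _ => ?_
  simp only [mul_apply, conjTranspose_apply, kroneckerMap_apply, submatrix_apply]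
  refine Fintype.sum_equiv (Equiv.prodComm A B) _ _ fun x => ?_
  rw [Fintype.sum_equiv (Equiv.prodComm A B) _
    (fun y : B × A => star (V y.1 j * U y.2 i) * ρ y.swap x) fun y => ?_]
  · simp [mul_comm]
  · simp [mul_comm]

theorem vnEntropy_subadd {ρ : Matrix (A × B) (A × B) ℂ} (h : ρ.PosSemidef) (ht : ρ.trace = 1)
    {ρA : Matrix A A ℂ} {ρB : Matrix B B ℂ}
    (eA : ρA = of fun a a' => ∑ b, ρ (a, b) (a', b))
    (eB : ρB = of fun b b' => ∑ a, ρ (a, b) (a, b')) :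
    vnEntropy ρ ≤ vnEntropy ρA + vnEntropy ρB := by
  have hA : ρA.IsHermitian := by
    ext a a'
    simp only [eA, conjTranspose_apply, of_apply, star_sum]
    exact Finset.sum_congr rfl fun b _ => h.isHermitian.apply _ _
  have hB : ρB.IsHermitian := by
    ext a a'
    simp only [eB, conjTranspose_apply, of_apply, star_sum]
    exact Finset.sum_congr rfl fun b _ => h.isHermitian.apply _ _
  set U := (hA.eigenvectorUnitary : Matrix A A ℂ) with hU
  set V := (hB.eigenvectorUnitary : Matrix B B ℂ) with hV
  have dA : Uᴴ * ρA * U = diagonal (fun i => (hA.eigenvalues i : ℂ)) := by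
    conv_lhs => rw [spectral_mul hA]
    rw [← hU, mul_assoc, mul_assoc, mul_assoc, star_mul_unit, mul_one, ← mul_assoc, star_mul_unit, one_mul]
  have dB : Vᴴ * ρB * V = diagonal (fun i => (hB.eigenvalues i : ℂ)) := by
    conv_lhs => rw [spectral_mul hB]
    rw [← hV, mul_assoc, mul_assoc, mul_assoc, star_mul_unit, mul_one, ← mul_assoc, star_mul_unit, one_mul]
  have kU1 : (U ⊗ₖ V)ᴴ * (U ⊗ₖ V) = 1 := by
    rw [conjTranspose_kronecker, ← mul_kronecker_mul, star_mul_unit, star_mul_unit,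
      one_kronecker_one]
  have kU2 : (U ⊗ₖ V) * (U ⊗ₖ V)ᴴ = 1 := by
    rw [conjTranspose_kronecker, ← mul_kronecker_mul, unit_mul_star, unit_mul_star,
      one_kronecker_one]
  set q : A → B → ℝ := fun i j => (((U ⊗ₖ V)ᴴ * ρ * (U ⊗ₖ V)) (i, j) (i, j)).re with hq
  have qA : ∀ i, ∑ j, q i j = hA.eigenvalues i := by
    intro i
    rw [hq]
    simp only
    rw [← Complex.re_sum, marg_left ρ U V (unit_mul_star hB), ← eA, dA]
    simp
  have qB : ∀ j, ∑ i, q i j = hB.eigenvalues j := by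
    intro i
    rw [hq]
    simp only
    rw [← Complex.re_sum, marg_right ρ U V (unit_mul_star hA), ← eB, dB]
    simp
  have tA : ρA.trace = 1 := by
    rw [← ht, eA]; simp [trace, Fintype.sum_prod_type]
  have q0 : ∀ i j, 0 ≤ q i j := by
    intro i j
    have := (h.conjTranspose_mul_mul_same (U ⊗ₖ V)).diag_nonneg (i := (i, j))
    exact (Complex.le_def.1 this).1
  have := classical_subadd q q0 (by simp only [qA]; exact sum_eig hA tA)
  simp only [qA, qB] at this
  rw [← vnEntropy_of_herm hA, ← vnEntropy_of_herm hB] at this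
  refine (vnEntropy_le_pinch h (U ⊗ₖ V) kU1 kU2).trans ?_
  rw [Fintype.sum_prod_type]
  exact this

end Entropy

/-! ### The Knill–Laflamme type structure of a qualified set -/

section Structure

open scoped Kronecker

variable {A C J K : Type*} [Fintype A] [DecidableEq A] [Fintype C] [DecidableEq C]
  [Fintype J] [Fintype K] [DecidableEq K]

lemma scalar_of_id (F : J → Matrix K K ℂ)
    (hF : ∀ ρ : Matrix K K ℂ, IsDensity ρ → ∑ j, F j * ρ * (F j)ᴴ = ρ) :
    ∃ t : J → ℂ, ∀ j, F j = t j • (1 : Matrix K K ℂ) := by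
  classical
  rcases isEmpty_or_nonempty K with hK | hK
  · exact ⟨0, fun j => by ext i; exact hK.elim i⟩
  -- off-diagonal entries vanish
  have h1 : ∀ h k : K, ∑ j, Complex.normSq (F j k h) = if k = h then 1 else 0 := by
    intro h k
    have hd : IsDensity (vecMulVec (Pi.single h (1 : ℂ)) (star (Pi.single h (1 : ℂ)))) := by
      refine ⟨posSemidef_vecMulVec_self_star _, ?_⟩
      rw [trace_vecMulVec]
      simp
    have := congrFun (congrFun (hF _ hd) k) k
    rw [Matrix.sum_apply] at this
    simp only [mul_vecMulVec, vecMulVec_mul, mulVec_single_one, vecMulVec_apply] at this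
    have h2 : ∀ j, (star (Pi.single h (1 : ℂ)) ᵥ* (F j)ᴴ) k = star (F j k h) := by
      intro j
      simp [vecMul, dotProduct, Pi.single_apply]
    simp only [h2, col_apply, RCLike.star_def, Complex.mul_conj] at this
    have h3 : (((∑ j, Complex.normSq (F j k h)) : ℝ) : ℂ) = ((if k = h then 1 else 0 : ℝ) : ℂ) := by
      push_cast
      rw [this]
      by_cases hkh : k = h <;> simp [Pi.single_apply, hkh]
    exact_mod_cast h3
  have hoff : ∀ j k h, k ≠ h → F j k h = 0 := by
    intro j k h hkh
    have := h1 h k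
    rw [if_neg hkh, Finset.sum_eq_zero_iff_of_nonneg (fun _ _ => Complex.normSq_nonneg _)] at this
    exact Complex.normSq_eq_zero.1 (this j (Finset.mem_univ _))
  have hdiag : ∀ j, F j = diagonal (fun k => F j k k) := by
    intro j
    ext k h
    by_cases hkh : k = h
    · subst hkh; simp
    · rw [diagonal_apply_ne _ hkh, hoff j k h hkh]
  -- diagonal entries are equal
  have h2 : ∀ h k : K, ∑ j, F j h h * star (F j k k) = 1 := by
    intro h k
    have hc : (Fintype.card K : ℂ) ≠ 0 := by simp
    have hd : IsDensity ((Fintype.card K : ℂ)⁻¹ •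
        vecMulVec (fun _ : K => (1 : ℂ)) (star (fun _ : K => (1 : ℂ)))) := by
      refine ⟨(posSemidef_vecMulVec_self_star _).smul ?_, ?_⟩
      · rw [← Complex.ofReal_natCast, ← Complex.ofReal_inv]
        exact Complex.zero_le_real.2 (by positivity)
      · rw [trace_smul, trace_vecMulVec]
        simp [dotProduct]
    have := congrFun (congrFun (hF _ hd) h) k
    rw [Matrix.sum_apply] at this
    have h3 : ∀ j, (F j * ((Fintype.card K : ℂ)⁻¹ •
        vecMulVec (fun _ : K => (1 : ℂ)) (star (fun _ : K => (1 : ℂ)))) * (F j)ᴴ) h k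
        = (Fintype.card K : ℂ)⁻¹ * (F j h h * star (F j k k)) := by
      intro j
      rw [hdiag j, diagonal_conjTranspose, mul_diagonal, diagonal_mul]
      simp [vecMulVec_apply]
      ring
    simp only [h3, ← Finset.mul_sum] at this
    have h4 : (Fintype.card K : ℂ)⁻¹ * ∑ j, F j h h * star (F j k k)
        = (Fintype.card K : ℂ)⁻¹ * 1 := by
      rw [this]; simp [vecMulVec_apply]
    exact mul_left_cancel₀ (inv_ne_zero hc) h4
  have heq : ∀ j h k, F j h h = F j k k := by
    intro j h k
    have hs : ∑ j, Complex.normSq (F j h h - F j k k) = 0 := by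
      have : ((∑ j, Complex.normSq (F j h h - F j k k) : ℝ) : ℂ) = 0 := by
        push_cast
        have e : ∀ j, (Complex.normSq (F j h h - F j k k) : ℂ) =
            F j h h * star (F j h h) - F j h h * star (F j k k) - F j k k * star (F j h h)
              + F j k k * star (F j k k) := by
          intro j
          rw [← Complex.mul_conj]
          simp only [map_sub, RCLike.star_def]
          ring
        simp only [e, Finset.sum_add_distrib, Finset.sum_sub_distrib, h2]
        ring
      exact_mod_cast this
    rw [Finset.sum_eq_zero_iff_of_nonneg (fun _ _ => Complex.normSq_nonneg _)] at hs
    exact sub_eq_zero.1 (Complex.normSq_eq_zero.1 (hs j (Finset.mem_univ _)))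
  obtain ⟨k0⟩ := hK
  refine ⟨fun j => F j k0 k0, fun j => ?_⟩
  rw [hdiag j, smul_one_eq_diagonal]
  congr 1
  funext k
  simp [heq j k k0]

lemma knill_laflamme {N : ℕ} (R : Fin N → Matrix K A ℂ) (hR : ∑ a, (R a)ᴴ * R a = 1)
    (E : C → Matrix A K ℂ)
    (h : ∀ ρ : Matrix K K ℂ, IsDensity ρ →
      ∑ a, R a * (∑ z, E z * ρ * (E z)ᴴ) * (R a)ᴴ = ρ) :
    ∃ c : Matrix C C ℂ, ∀ z w, (E z)ᴴ * E w = c z w • (1 : Matrix K K ℂ) := by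
  obtain ⟨t, ht⟩ := scalar_of_id (fun x : Fin N × C => R x.1 * E x.2) (by
    intro ρ hρ
    conv_rhs => rw [← h ρ hρ]
    rw [Fintype.sum_prod_type]
    refine Finset.sum_congr rfl fun a _ => ?_
    rw [Matrix.mul_sum, Matrix.sum_mul]
    refine Finset.sum_congr rfl fun z _ => ?_
    simp only [conjTranspose_mul, Matrix.mul_assoc])
  refine ⟨of fun z w => ∑ a, star (t (a, z)) * t (a, w), fun z w => ?_⟩
  have e : (E z)ᴴ * E w = ∑ a, (R a * E z)ᴴ * (R a * E w) := by
    calc (E z)ᴴ * E w = (E z)ᴴ * (∑ a, (R a)ᴴ * R a) * E w := by rw [hR, Matrix.mul_one]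
      _ = _ := by
        rw [Matrix.mul_sum, Matrix.sum_mul]
        refine Finset.sum_congr rfl fun z _ => ?_
        simp only [conjTranspose_mul, Matrix.mul_assoc]
  rw [e, of_apply, Finset.sum_smul]
  refine Finset.sum_congr rfl fun a _ => ?_
  have h1 := ht (a, z)
  have h2 := ht (a, w)
  simp only at h1 h2
  rw [h1, h2]
  simp [smul_smul, mul_comm]

open scoped MatrixOrder in
lemma exists_factor {ρ : Matrix K K ℂ} (h : ρ.PosSemidef) : ∃ B : Matrix K K ℂ, ρ = Bᴴ * B :=
  CStarAlgebra.nonneg_iff_eq_star_mul_self.mp h.nonneg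

lemma entropy_encoded [Nonempty K] (E : C → Matrix A K ℂ) (c : Matrix C C ℂ)
    (hc : ∀ z w, (E z)ᴴ * E w = c z w • (1 : Matrix K K ℂ))
    (hE : ∑ z, (E z)ᴴ * E z = 1) (ρ : Matrix K K ℂ) (hρ : IsDensity ρ) :
    vnEntropy (∑ z, E z * ρ * (E z)ᴴ) = vnEntropy c + vnEntropy ρ := by
  obtain ⟨k0⟩ := ‹Nonempty K›
  have ce : ∀ z w, c z w = ((E z)ᴴ * E w) k0 k0 := by
    intro z w; rw [hc]; simp
  have cH : c.IsHermitian := by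
    ext z w
    rw [conjTranspose_apply, ce, ce, ← conjTranspose_apply, conjTranspose_mul,
      conjTranspose_conjTranspose]
  have ct : c.trace = 1 := by
    have := congrFun (congrFun hE k0) k0
    rw [Matrix.sum_apply, one_apply_eq] at this
    rw [← this, trace]
    exact Finset.sum_congr rfl fun z _ => ce z z
  obtain ⟨B, hB⟩ := exists_factor hρ.1
  set M : Matrix A (C × K) ℂ := of fun f x => (E x.1 * Bᴴ) f x.2 with hM
  have e1 : ∑ z, E z * ρ * (E z)ᴴ = M * Mᴴ := by
    ext f g
    rw [Matrix.sum_apply, mul_apply, Fintype.sum_prod_type]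
    refine Finset.sum_congr rfl fun z _ => ?_
    have : E z * ρ * (E z)ᴴ = (E z * Bᴴ) * (E z * Bᴴ)ᴴ := by
      rw [hB]; simp [Matrix.mul_assoc]
    rw [this, mul_apply]
    rfl
  have e2 : Mᴴ * M = c ⊗ₖ (B * Bᴴ) := by
    ext ⟨z, h⟩ ⟨w, k⟩
    have : (E z * Bᴴ)ᴴ * (E w * Bᴴ) = c z w • (B * Bᴴ) := by
      rw [conjTranspose_mul, conjTranspose_conjTranspose, Matrix.mul_assoc,
        ← Matrix.mul_assoc (E z)ᴴ, hc]
      simp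
    have h2 := congrFun (congrFun this h) k
    rw [mul_apply] at h2 ⊢
    rw [kroneckerMap_apply]
    exact h2
  rw [e1, vnEntropy_mul_comm, e2, vnEntropy_kronecker cH (isHermitian_mul_conjTranspose_self B) ct,
    vnEntropy_mul_comm, ← hB]
  rw [trace_mul_comm, ← hB, hρ.2]

end Structure

/-! ### Partial traces -/

section PartialTrace

lemma ptraceSubset_conj (X : Finset (Fin nn)) (V : Matrix ((i : Fin nn) → d i) H ℂ)
    (ρ : Matrix H H ℂ) :
    ptraceSubset X (V * ρ * Vᴴ) = ∑ z : (i : {i // i ∉ X}) → d i,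
      (of fun f h => V (mergeFun X f z) h) * ρ *
        (of fun (f : (i : {i // i ∈ X}) → d i) h => V (mergeFun X f z) h)ᴴ := by
  ext f g
  rw [Matrix.sum_apply]
  rfl

lemma sum_merge {M : Type*} [AddCommMonoid M] (X : Finset (Fin nn))
    (F : ((i : Fin nn) → d i) → M) :
    ∑ z : (i : {i // i ∉ X}) → d i, ∑ f : (i : {i // i ∈ X}) → d i, F (mergeFun X f z)
      = ∑ x, F x := by
  rw [Finset.sum_comm, ← Fintype.sum_prod_type']
  exact Fintype.sum_equiv (Equiv.piEquivPiSubtypeProd (fun i => i ∈ X) d).symm _ _ fun x => rfl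

lemma sum_kraus (X : Finset (Fin nn)) (V : Matrix ((i : Fin nn) → d i) H ℂ) :
    ∑ z : (i : {i // i ∉ X}) → d i,
      (of fun (f : (i : {i // i ∈ X}) → d i) h => V (mergeFun X f z) h)ᴴ *
        (of fun (f : (i : {i // i ∈ X}) → d i) h => V (mergeFun X f z) h) = Vᴴ * V := by
  ext h k
  rw [Matrix.sum_apply]
  simp only [mul_apply, conjTranspose_apply, of_apply]
  exact sum_merge X (fun x => star (V x h) * V x k)

lemma ptrace_trace (X : Finset (Fin nn))
    (M : Matrix ((i : Fin nn) → d i) ((i : Fin nn) → d i) ℂ) :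
    (ptraceSubset X M).trace = M.trace := by
  simp only [trace, diag_apply, ptraceSubset]
  rw [Finset.sum_comm]
  exact sum_merge X (fun x => M x x)

/-- Assignments on `X ∪ Y` as pairs. -/
def unionEquiv (X Y : Finset (Fin nn)) (hXY : Disjoint X Y) :
    ((i : {i // i ∈ X ∪ Y}) → d i) ≃
      ((i : {i // i ∈ X}) → d i) × ((i : {i // i ∈ Y}) → d i) where
  toFun f := (fun i => f ⟨i, Finset.mem_union_left _ i.2⟩,
    fun i => f ⟨i, Finset.mem_union_right _ i.2⟩)
  invFun p := fun i => if h : i.1 ∈ X then p.1 ⟨i, h⟩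
    else p.2 ⟨i, (Finset.mem_union.1 i.2).resolve_left h⟩
  left_inv f := by
    funext i
    by_cases h : i.1 ∈ X <;> simp [h]
  right_inv p := by
    ext i
    · simp
    · have : i.1 ∉ X := fun h => Finset.disjoint_left.1 hXY h i.2
      simp [this]

/-- Assignments on the complement of `S` split along `T`. -/
def complEquiv (S T U : Finset (Fin nn)) (hST : Disjoint S T)
    (hU : ∀ i, i ∈ U ↔ i ∈ S ∨ i ∈ T) :
    ((i : {i // i ∉ S}) → d i) ≃
      ((i : {i // i ∈ T}) → d i) × ((i : {i // i ∉ U}) → d i) where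
  toFun z := (fun i => z ⟨i, fun h => Finset.disjoint_left.1 hST h i.2⟩,
    fun i => z ⟨i, fun h => i.2 ((hU _).2 (Or.inl h))⟩)
  invFun p := fun i => if h : i.1 ∈ T then p.1 ⟨i, h⟩
    else p.2 ⟨i, fun h' => ((hU _).1 h').elim i.2 h⟩
  left_inv f := by
    funext i
    by_cases h : i.1 ∈ T <;> simp [h]
  right_inv p := by
    ext i
    · simp
    · have : i.1 ∉ T := fun h => i.2 ((hU _).2 (Or.inr h))
      simp [this]

lemma ptrace_left (X Y : Finset (Fin nn)) (hXY : Disjoint X Y)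
    (M : Matrix ((i : Fin nn) → d i) ((i : Fin nn) → d i) ℂ) :
    ptraceSubset X M = of fun a a' => ∑ b,
      (reindex (unionEquiv X Y hXY) (unionEquiv X Y hXY) (ptraceSubset (X ∪ Y) M)) (a, b) (a', b) := by
  have key : ∀ (a : (i : {i // i ∈ X}) → d i) (z : (i : {i // i ∉ X}) → d i),
      mergeFun X a z = mergeFun (X ∪ Y)
        ((unionEquiv X Y hXY).symm (a, (complEquiv X Y (X ∪ Y) hXY (by simp) z).1))
        (complEquiv X Y (X ∪ Y) hXY (by simp) z).2 := by
    intro a z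
    funext i
    by_cases h : i ∈ X <;> by_cases h' : i ∈ Y <;>
      simp [mergeFun, unionEquiv, complEquiv, h, h']
  ext a a'
  simp only [of_apply, reindex_apply, submatrix_apply, ptraceSubset]
  rw [← Fintype.sum_prod_type']
  refine Fintype.sum_equiv (complEquiv X Y (X ∪ Y) hXY (by simp)) _ _ fun z => ?_
  rw [key a, key a']

lemma ptrace_right (X Y : Finset (Fin nn)) (hXY : Disjoint X Y)
    (M : Matrix ((i : Fin nn) → d i) ((i : Fin nn) → d i) ℂ) :
    ptraceSubset Y M = of fun b b' => ∑ a,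
      (reindex (unionEquiv X Y hXY) (unionEquiv X Y hXY) (ptraceSubset (X ∪ Y) M)) (a, b) (a, b') := by
  have hU : ∀ i, i ∈ X ∪ Y ↔ i ∈ Y ∨ i ∈ X := by intro i; simp [or_comm]
  have key : ∀ (a : (i : {i // i ∈ Y}) → d i) (z : (i : {i // i ∉ Y}) → d i),
      mergeFun Y a z = mergeFun (X ∪ Y)
        ((unionEquiv X Y hXY).symm ((complEquiv Y X (X ∪ Y) hXY.symm hU z).1, a))
        (complEquiv Y X (X ∪ Y) hXY.symm hU z).2 := by
    intro a z
    funext i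
    by_cases h : i ∈ X
    · have h' : i ∉ Y := fun h' => Finset.disjoint_left.1 hXY h h'
      simp [mergeFun, unionEquiv, complEquiv, h, h']
    · by_cases h' : i ∈ Y <;>
      simp [mergeFun, unionEquiv, complEquiv, h, h']
  ext a a'
  simp only [of_apply, reindex_apply, submatrix_apply, ptraceSubset]
  rw [← Fintype.sum_prod_type']
  refine Fintype.sum_equiv (complEquiv Y X (X ∪ Y) hXY.symm hU) _ _ fun z => ?_
  rw [key a, key a']

lemma ptrace_subadd (X Y : Finset (Fin nn)) (hXY : Disjoint X Y)
    (V : Matrix ((i : Fin nn) → d i) H ℂ) (hV : Vᴴ * V = 1)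
    (ρ : Matrix H H ℂ) (hρ : IsDensity ρ) :
    vnEntropy (ptraceSubset (X ∪ Y) (V * ρ * Vᴴ)) ≤
      vnEntropy (ptraceSubset X (V * ρ * Vᴴ)) + vnEntropy (ptraceSubset Y (V * ρ * Vᴴ)) := by
  have hP : (ptraceSubset (X ∪ Y) (V * ρ * Vᴴ)).PosSemidef := by
    rw [ptraceSubset_conj]
    exact posSemidef_sum _ fun z _ => hρ.1.mul_mul_conjTranspose_same _
  have ht : (ptraceSubset (X ∪ Y) (V * ρ * Vᴴ)).trace = 1 := by
    rw [ptrace_trace, trace_mul_comm, ← Matrix.mul_assoc, hV, Matrix.one_mul, hρ.2]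
  rw [← vnEntropy_reindex (unionEquiv X Y hXY) hP.isHermitian]
  refine vnEntropy_subadd ?_ ?_ (ptrace_left X Y hXY _) (ptrace_right X Y hXY _)
  · rw [reindex_apply]; exact hP.submatrix _
  · rw [← ht, reindex_apply]
    simp only [trace, diag_apply, submatrix_apply]
    exact Equiv.sum_comp (unionEquiv X Y hXY).symm
      (fun f => ptraceSubset (X ∪ Y) (V * ρ * Vᴴ) f f)

end PartialTrace

/-- For a pure-state QSS scheme `W(ρ) = VρV*`, disjoint subsets `X, Y` of shares with
`X ∪ Y` qualified and `Y` forbidden, and any (finitely supported) probability measure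
`μ = (p, ρs)` on pure states with barycenter `σ_μ`, one has
`H(σ_μ) ≤ H(W_X(σ_μ)) - E_μ[H_ρ(W_X | W_Y)]`, where
`H_ρ(W_X|W_Y) = H(W_{X∪Y}(ρ)) - H(W_Y(ρ))`. -/
theorem stmt_15
    (W : Matrix H H ℂ →ₗ[ℂ] Matrix ((i : Fin nn) → d i) ((i : Fin nn) → d i) ℂ)
    (V : Matrix ((i : Fin nn) → d i) H ℂ) (hV : Vᴴ * V = 1)
    (hWV : ∀ ρ, W ρ = V * ρ * Vᴴ)
    (X Y : Finset (Fin nn)) (hXY : Disjoint X Y)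
    (hQ : Qualified W (X ∪ Y)) (hF : Forbidden W Y)
    {ι : Type*} [Fintype ι] (p : ι → ℝ) (hp : ∀ i, 0 ≤ p i) (hp1 : ∑ i, p i = 1)
    (ρs : ι → Matrix H H ℂ) (hρs : ∀ i, IsPure (ρs i)) :
    vnEntropy (∑ j, p j • ρs j) ≤
      vnEntropy (ptraceSubset X (W (∑ j, p j • ρs j))) -
        ∑ i, p i *
          (vnEntropy (ptraceSubset (X ∪ Y) (W (ρs i))) -
            vnEntropy (ptraceSubset Y (W (ρs i)))) := by
  classical
  set σ : Matrix H H ℂ := ∑ j, p j • ρs j with hσ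
  have hσd : IsDensity σ := by
    constructor
    · exact posSemidef_sum _ fun j _ => (hρs j).1.1.smul (hp j)
    · rw [hσ, trace_sum]
      simp only [trace_smul, (hρs _).1.2, Complex.real_smul, mul_one]
      exact_mod_cast hp1
  have hne : Nonempty H := by
    by_contra hc
    rw [not_nonempty_iff] at hc
    have := hσd.2
    simp [trace] at this
  obtain ⟨R, ⟨N, K, hK, hK1⟩, hR⟩ := hQ
  obtain ⟨ρ₀, -, hρ₀⟩ := hF
  obtain ⟨c, hc⟩ := knill_laflamme K hK1
    (fun z : (i : {i // i ∉ X ∪ Y}) → d i =>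
      (of fun (f : (i : {i // i ∈ X ∪ Y}) → d i) h => V (mergeFun (X ∪ Y) f z) h)) (by
    intro ρ hρ
    rw [← ptraceSubset_conj, ← hK, ← hWV]
    exact hR ρ hρ)
  have hent : ∀ ρ, IsDensity ρ →
      vnEntropy (ptraceSubset (X ∪ Y) (W ρ)) = vnEntropy c + vnEntropy ρ := by
    intro ρ hρ
    rw [hWV, ptraceSubset_conj]
    exact entropy_encoded _ c hc ((sum_kraus (X ∪ Y) V).trans hV) ρ hρ
  have hsum : ∑ i, p i * (vnEntropy (ptraceSubset (X ∪ Y) (W (ρs i))) -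
      vnEntropy (ptraceSubset Y (W (ρs i)))) = vnEntropy c - vnEntropy ρ₀ := by
    simp only [hent _ (hρs _).1, hρ₀ _ (hρs _).1, vnEntropy_pure (hρs _), add_zero,
      ← Finset.sum_mul, hp1, one_mul]
  have hsub := ptrace_subadd X Y hXY V hV σ hσd
  rw [← hWV, hent σ hσd, hρ₀ σ hσd] at hsub
  rw [hsum]
  linarith
end
end

section
/- For any quantum secret sharing scheme W_N and any significant set X ⊆ N (i.e., there exists a forbidden set Y with X ∪ Y qualified), and for every probability measure μ supported on pure states with barycenter σ_μ, it holds that H(σ_μ) ≤ H(W_X(σ_μ)). -/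
open Matrix
open scoped ComplexOrder

noncomputable section

variable {nn : ℕ} {d : Fin nn → Type} [∀ i, Fintype (d i)] [∀ i, DecidableEq (d i)]
variable {H : Type} [Fintype H] [DecidableEq H]

section Entropy

universe u v w

theorem qss_vnEntropy_eq_roots {n : Type*} [Fintype n] [DecidableEq n] {ρ : Matrix n n ℂ}
    (h : ρ.IsHermitian) :
    vnEntropy ρ = (ρ.charpoly.roots.map (fun z : ℂ => Real.negMulLog z.re)).sum := by
  rw [vnEntropy, dif_pos h, h.roots_charpoly_eq_eigenvalues, Multiset.map_map]
  rfl

theorem qss_vnEntropy_congr {n : Type*} [Fintype n] [DecidableEq n] {ρ σ : Matrix n n ℂ}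
    (h : ρ.IsHermitian) (h' : σ.IsHermitian) (hc : ρ.charpoly = σ.charpoly) :
    vnEntropy ρ = vnEntropy σ := by
  rw [qss_vnEntropy_eq_roots h, qss_vnEntropy_eq_roots h', hc]

theorem qss_vnEntropy_transpose {n : Type*} [Fintype n] [DecidableEq n] {ρ : Matrix n n ℂ}
    (h : ρ.IsHermitian) : vnEntropy ρᵀ = vnEntropy ρ :=
  qss_vnEntropy_congr h.transpose h (Matrix.charpoly_transpose ρ)

theorem qss_vnEntropy_mul_comm {m n : Type*} [Fintype m] [DecidableEq m] [Fintype n]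
    [DecidableEq n] (M : Matrix m n ℂ) : vnEntropy (M * Mᴴ) = vnEntropy (Mᴴ * M) := by
  rw [qss_vnEntropy_eq_roots (Matrix.isHermitian_mul_conjTranspose_self M),
    qss_vnEntropy_eq_roots (Matrix.isHermitian_conjTranspose_mul_self M)]
  have h := congrArg (fun p : Polynomial ℂ =>
    (p.roots.map (fun z : ℂ => Real.negMulLog z.re)).sum) (Matrix.charpoly_mul_comm' M Mᴴ)
  have hne : ∀ k : ℕ, ∀ p : Polynomial ℂ, p.Monic → Polynomial.X ^ k * p ≠ 0 := fun k p hp =>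
    mul_ne_zero (pow_ne_zero _ Polynomial.X_ne_zero) hp.ne_zero
  rw [Polynomial.roots_mul (hne _ _ (Matrix.charpoly_monic _)),
    Polynomial.roots_mul (hne _ _ (Matrix.charpoly_monic _))] at h
  simpa [Multiset.map_nsmul, Multiset.sum_nsmul] using h

theorem qss_vnEntropy_diag {n : Type*} [Fintype n] [DecidableEq n] {ρ : Matrix n n ℂ}
    (U : Matrix n n ℂ) (hU : Uᴴ * U = 1) (l : n → ℝ)
    (h : ρ = U * diagonal (fun i => (l i : ℂ)) * Uᴴ) :
    vnEntropy ρ = ∑ i, Real.negMulLog (l i) := by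
  have hd : (diagonal (fun i => (l i : ℂ))).IsHermitian := by
    rw [Matrix.IsHermitian, diagonal_conjTranspose]
    congr 1; ext i; simp
  have hρ : ρ.IsHermitian := by
    rw [h]; exact Matrix.isHermitian_mul_mul_conjTranspose _ hd
  have hc : ρ.charpoly = (diagonal (fun i => (l i : ℂ))).charpoly := by
    rw [h, Matrix.charpoly_mul_comm, ← mul_assoc, hU, one_mul]
  rw [qss_vnEntropy_eq_roots hρ, hc, Matrix.charpoly_diagonal, Polynomial.roots_prod]
  · simp
  · simp [Finset.prod_ne_zero_iff, Polynomial.X_sub_C_ne_zero]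

/-- Spectral theorem in a convenient form. -/
theorem qss_spectral {n : Type*} [Fintype n] [DecidableEq n] {ρ : Matrix n n ℂ}
    (h : ρ.IsHermitian) : ∃ U : Matrix n n ℂ, Uᴴ * U = 1 ∧ U * Uᴴ = 1 ∧
      ρ = U * diagonal (fun i => (h.eigenvalues i : ℂ)) * Uᴴ := by
  refine ⟨h.eigenvectorUnitary, ?_, ?_, ?_⟩
  · exact Unitary.coe_star_mul_self _
  · exact Unitary.coe_mul_star_self _
  · exact h.spectral_theorem

theorem qss_entropy_le_diag {n : Type*} [Fintype n] [DecidableEq n] {σ : Matrix n n ℂ}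
    (h : σ.PosSemidef) : vnEntropy σ ≤ ∑ i, Real.negMulLog (σ i i).re := by
  obtain ⟨U, h1, h2, hs⟩ := qss_spectral h.1
  have hdiag : ∀ i, (σ i i).re = ∑ k, Complex.normSq (U i k) * h.1.eigenvalues k := by
    intro i
    conv_lhs => rw [hs]
    rw [Matrix.mul_apply, Complex.re_sum]
    refine Finset.sum_congr rfl fun k _ => ?_
    rw [Matrix.mul_diagonal, conjTranspose_apply, mul_right_comm]
    simp [Complex.mul_conj]
  have hrow : ∀ i, ∑ k, Complex.normSq (U i k) = 1 := by
    intro i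
    have := congrFun (congrFun h2 i) i
    simp only [Matrix.mul_apply, conjTranspose_apply, one_apply_eq] at this
    have := congrArg Complex.re this
    simpa [Complex.mul_conj] using this
  have hcol : ∀ k, ∑ i, Complex.normSq (U i k) = 1 := by
    intro i
    have := congrFun (congrFun h1 i) i
    simp only [Matrix.mul_apply, conjTranspose_apply, one_apply_eq] at this
    have := congrArg Complex.re this
    simpa [mul_comm, Complex.mul_conj, Complex.normSq_apply] using this
  rw [vnEntropy, dif_pos h.1]
  calc ∑ k, Real.negMulLog (h.1.eigenvalues k)
      = ∑ i, ∑ k, Complex.normSq (U i k) * Real.negMulLog (h.1.eigenvalues k) := by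
        rw [Finset.sum_comm]
        refine Finset.sum_congr rfl fun k _ => ?_
        rw [← Finset.sum_mul, hcol, one_mul]
    _ ≤ _ := by
        refine Finset.sum_le_sum fun i _ => ?_
        rw [hdiag]
        exact Real.concaveOn_negMulLog.le_map_sum (fun k _ => Complex.normSq_nonneg _)
          (hrow i) (fun k _ => h.eigenvalues_nonneg k)

/-- Classical subadditivity. -/
theorem qss_classical {a b : Type*} [Fintype a] [Fintype b] (p : a → b → ℝ)
    (hp : ∀ i j, 0 ≤ p i j) (h1 : ∑ i, ∑ j, p i j = 1) :
    ∑ i, ∑ j, Real.negMulLog (p i j) ≤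
      ∑ i, Real.negMulLog (∑ j, p i j) + ∑ j, Real.negMulLog (∑ i, p i j) := by
  set A : a → ℝ := fun i => ∑ j, p i j with hA
  set B : b → ℝ := fun j => ∑ i, p i j with hB
  have hB1 : ∑ j, B j = 1 := by rw [hB, Finset.sum_comm]; exact h1
  have key : ∀ i j, Real.negMulLog (p i j) ≤
      -(p i j * Real.log (A i)) - p i j * Real.log (B j) + (A i * B j - p i j) := by
    intro i j
    have hAi : p i j ≤ A i := Finset.single_le_sum (fun j _ => hp i j) (Finset.mem_univ j)
    have hBj : p i j ≤ B j :=
      Finset.single_le_sum (f := fun i => p i j) (fun i _ => hp i j) (Finset.mem_univ i)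
    rcases (hp i j).eq_or_lt with h0 | h0
    · rw [← h0]; rw [← h0] at hAi hBj
      simp; positivity
    · have hA0 := h0.trans_le hAi
      have hB0 := h0.trans_le hBj
      have hl := Real.log_le_sub_one_of_pos (div_pos (mul_pos hA0 hB0) h0)
      rw [Real.log_div (mul_pos hA0 hB0).ne' h0.ne', Real.log_mul hA0.ne' hB0.ne'] at hl
      have := mul_le_mul_of_nonneg_left hl h0.le
      have e : p i j * (A i * B j / p i j - 1) = A i * B j - p i j := by field_simp
      rw [e] at this
      rw [Real.negMulLog]
      linarith
  refine (Finset.sum_le_sum fun i _ => Finset.sum_le_sum fun j _ => key i j).trans ?_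
  have e1 : ∑ i, ∑ j, p i j * Real.log (A i) = ∑ i, A i * Real.log (A i) := by
    simp only [hA, Finset.sum_mul]
  have e2 : ∑ i, ∑ j, p i j * Real.log (B j) = ∑ j, B j * Real.log (B j) := by
    rw [Finset.sum_comm]; simp only [hB, Finset.sum_mul]
  have e3 : ∑ i, ∑ j, A i * B j = 1 := by
    simp only [← Finset.mul_sum, hB1, mul_one]; exact h1
  simp only [Finset.sum_add_distrib, Finset.sum_sub_distrib, Finset.sum_neg_distrib, e1, e2, e3,
    Real.negMulLog, neg_mul]
  linarith

open scoped Kronecker in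
/-- Quantum subadditivity. -/
theorem qss_subadd {a b : Type*} [Fintype a] [DecidableEq a] [Fintype b] [DecidableEq b]
    (ρ : Matrix (a × b) (a × b) ℂ) (hρ : ρ.PosSemidef) (ht : ρ.trace = 1)
    (α : Matrix a a ℂ) (β : Matrix b b ℂ)
    (hα : ∀ i i', α i i' = ∑ j, ρ (i, j) (i', j))
    (hβ : ∀ j j', β j j' = ∑ i, ρ (i, j) (i, j')) :
    vnEntropy ρ ≤ vnEntropy α + vnEntropy β := by
  have hαH : α.IsHermitian := by
    ext i i'
    rw [conjTranspose_apply, hα, hα, star_sum]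
    exact Finset.sum_congr rfl fun j _ => hρ.1.apply _ _
  have hβH : β.IsHermitian := by
    ext i i'
    rw [conjTranspose_apply, hβ, hβ, star_sum]
    exact Finset.sum_congr rfl fun j _ => hρ.1.apply _ _
  obtain ⟨U, hU1, hU2, hUs⟩ := qss_spectral hαH
  obtain ⟨V, hV1, hV2, hVs⟩ := qss_spectral hβH
  have hUd : ∀ i, (Uᴴ * α * U) i i = (hαH.eigenvalues i : ℂ) := by
    intro i
    have : Uᴴ * α * U = diagonal (fun i => (hαH.eigenvalues i : ℂ)) := by
      conv_lhs => rw [hUs]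
      rw [← mul_assoc, ← mul_assoc, hU1, one_mul, mul_assoc, hU1, mul_one]
    rw [this, diagonal_apply_eq]
  have hVd : ∀ i, (Vᴴ * β * V) i i = (hβH.eigenvalues i : ℂ) := by
    intro i
    have : Vᴴ * β * V = diagonal (fun i => (hβH.eigenvalues i : ℂ)) := by
      conv_lhs => rw [hVs]
      rw [← mul_assoc, ← mul_assoc, hV1, one_mul, mul_assoc, hV1, mul_one]
    rw [this, diagonal_apply_eq]
  have hUe : ∀ i i', ∑ j, U i j * star (U i' j) = if i = i' then 1 else 0 := by
    intro i i'
    have := congrFun (congrFun hU2 i) i'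
    simpa [Matrix.mul_apply, one_apply] using this
  have hVe : ∀ i i', ∑ j, V i j * star (V i' j) = if i = i' then 1 else 0 := by
    intro i i'
    have := congrFun (congrFun hV2 i) i'
    simpa [Matrix.mul_apply, one_apply] using this
  set T : Matrix (a × b) (a × b) ℂ := U ⊗ₖ V with hT
  have hTT : T * Tᴴ = 1 := by
    rw [hT, conjTranspose_kronecker, ← mul_kronecker_mul, hU2, hV2, one_kronecker_one]
  set σ := Tᴴ * ρ * T with hσ
  have hσP : σ.PosSemidef := hρ.conjTranspose_mul_mul_same T
  have hS : vnEntropy ρ = vnEntropy σ := by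
    refine qss_vnEntropy_congr hρ.1 hσP.1 ?_
    rw [hσ, Matrix.charpoly_mul_comm, ← mul_assoc, hTT, one_mul]
  have hσe : ∀ i j, σ (i, j) (i, j) = ∑ k', ∑ l', ∑ k, ∑ l,
      star (U k i) * U k' i * ρ (k, l) (k', l') * (V l' j * star (V l j)) := by
    intro i j
    simp only [hσ, hT, Matrix.mul_apply, Fintype.sum_prod_type, conjTranspose_apply,
      kroneckerMap_apply, Finset.sum_mul, star_mul']
    refine Finset.sum_congr rfl fun _ _ => Finset.sum_congr rfl fun _ _ =>
      Finset.sum_congr rfl fun _ _ => Finset.sum_congr rfl fun _ _ => ?_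
    ring
  have hσe' : ∀ i j, σ (i, j) (i, j) = ∑ l', ∑ k', ∑ l, ∑ k,
      star (V l j) * V l' j * ρ (k, l) (k', l') * (U k' i * star (U k i)) := by
    intro i j
    rw [hσe, Finset.sum_comm]
    refine Finset.sum_congr rfl fun _ _ => Finset.sum_congr rfl fun _ _ => ?_
    rw [Finset.sum_comm]
    refine Finset.sum_congr rfl fun _ _ => Finset.sum_congr rfl fun _ _ => ?_
    ring
  have hA : ∀ i, ∑ j, σ (i, j) (i, j) = (hαH.eigenvalues i : ℂ) := by
    intro i
    rw [← hUd]
    calc ∑ j, σ (i, j) (i, j) = ∑ k', ∑ l', ∑ k, ∑ l,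
      star (U k i) * U k' i * ρ (k, l) (k', l') * ∑ j, (V l' j * star (V l j)) := by
          simp only [hσe, Finset.mul_sum]
          rw [Finset.sum_comm]; refine Finset.sum_congr rfl fun _ _ => ?_
          rw [Finset.sum_comm]; refine Finset.sum_congr rfl fun _ _ => ?_
          rw [Finset.sum_comm]; refine Finset.sum_congr rfl fun _ _ => ?_
          rw [Finset.sum_comm]
      _ = _ := by
          simp only [hVe, mul_ite, mul_one, mul_zero, Finset.sum_ite_eq, Finset.mem_univ, if_true]
          simp only [Matrix.mul_apply, hα, conjTranspose_apply, Finset.sum_mul, Finset.mul_sum]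
          refine Finset.sum_congr rfl fun k' _ => ?_
          rw [Finset.sum_comm]
          refine Finset.sum_congr rfl fun k _ => Finset.sum_congr rfl fun l _ => ?_
          ring
  have hB : ∀ j, ∑ i, σ (i, j) (i, j) = (hβH.eigenvalues j : ℂ) := by
    intro j
    rw [← hVd]
    calc ∑ i, σ (i, j) (i, j) = ∑ l', ∑ k', ∑ l, ∑ k,
      star (V l j) * V l' j * ρ (k, l) (k', l') * ∑ i, (U k' i * star (U k i)) := by
          simp only [hσe', Finset.mul_sum]
          rw [Finset.sum_comm]; refine Finset.sum_congr rfl fun _ _ => ?_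
          rw [Finset.sum_comm]; refine Finset.sum_congr rfl fun _ _ => ?_
          rw [Finset.sum_comm]; refine Finset.sum_congr rfl fun _ _ => ?_
          rw [Finset.sum_comm]
      _ = _ := by
          simp only [hUe, mul_ite, mul_one, mul_zero, Finset.sum_ite_eq, Finset.mem_univ, if_true]
          simp only [Matrix.mul_apply, hβ, conjTranspose_apply, Finset.sum_mul, Finset.mul_sum]
          refine Finset.sum_congr rfl fun k' _ => ?_
          rw [Finset.sum_comm]
          refine Finset.sum_congr rfl fun k _ => Finset.sum_congr rfl fun l _ => ?_
          ring
  have hp : ∀ i j, 0 ≤ (σ (i, j) (i, j)).re := fun i j => 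
    (Complex.nonneg_iff.mp (hσP.diag_nonneg (i := (i, j)))).1
  have htσ : σ.trace = 1 := by
    rw [hσ, Matrix.trace_mul_comm, ← mul_assoc, hTT, one_mul, ht]
  have hsum : ∑ i, ∑ j, (σ (i, j) (i, j)).re = 1 := by
    have := congrArg Complex.re htσ
    simpa [Matrix.trace, Fintype.sum_prod_type] using this
  have hcl := qss_classical (fun i j => (σ (i, j) (i, j)).re) hp hsum
  rw [hS]
  refine (qss_entropy_le_diag hσP).trans ?_
  rw [Fintype.sum_prod_type]
  refine hcl.trans (le_of_eq ?_)
  rw [vnEntropy, vnEntropy, dif_pos hαH, dif_pos hβH]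
  simp only [← Complex.re_sum, hA, hB, Complex.ofReal_re]

open scoped Kronecker in
theorem qss_kron {a b : Type*} [Fintype a] [DecidableEq a] [Fintype b] [DecidableEq b]
    (α : Matrix a a ℂ) (β : Matrix b b ℂ) (hα : α.IsHermitian) (hβ : β.IsHermitian)
    (ta : α.trace = 1) (tb : β.trace = 1) :
    vnEntropy (α ⊗ₖ β) = vnEntropy α + vnEntropy β := by
  obtain ⟨U, hU1, hU2, hUs⟩ := qss_spectral hα
  obtain ⟨V, hV1, hV2, hVs⟩ := qss_spectral hβ
  have h := qss_vnEntropy_diag (ρ := α ⊗ₖ β) (U ⊗ₖ V)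
    (by rw [conjTranspose_kronecker, ← mul_kronecker_mul, hU1, hV1, one_kronecker_one])
    (fun x => hα.eigenvalues x.1 * hβ.eigenvalues x.2) (by
      conv_lhs => rw [hUs, hVs]
      rw [mul_kronecker_mul, mul_kronecker_mul, diagonal_kronecker_diagonal,
        conjTranspose_kronecker]
      simp)
  have sa : ∑ i, hα.eigenvalues i = 1 := by
    have := congrArg Complex.re hα.trace_eq_sum_eigenvalues; rw [ta] at this; simpa using this.symm
  have sb : ∑ i, hβ.eigenvalues i = 1 := by
    have := congrArg Complex.re hβ.trace_eq_sum_eigenvalues; rw [tb] at this; simpa using this.symm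
  rw [h, vnEntropy, vnEntropy, dif_pos hα, dif_pos hβ, Fintype.sum_prod_type]
  simp only [Real.negMulLog_mul, Finset.sum_add_distrib, ← Finset.sum_mul, ← Finset.mul_sum,
    sa, sb, one_mul]

end Entropy

section Core

open scoped Kronecker in
/-- One of the two entropy inequalities for a four-partite pure state. -/
theorem qss_half {R A Y C : Type*} [Fintype R] [DecidableEq R] [Fintype A] [DecidableEq A]
    [Fintype Y] [DecidableEq Y] [Fintype C] [DecidableEq C]
    (ψ : R → A → Y → C → ℂ) (τ : Matrix R R ℂ) (β : Matrix Y Y ℂ) (κ : Matrix C C ℂ)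
    (α : Matrix A A ℂ)
    (hτ : τ.trace = 1) (hβ : β.trace = 1)
    (h1 : ∀ r r' y y', ∑ x, ∑ c, ψ r x y c * star (ψ r' x y' c) = τ r r' * β y y')
    (h2 : ∀ c c', ∑ r, ∑ y, ∑ x, ψ r x y c * star (ψ r x y c') = κ c c')
    (h3 : ∀ x x', ∑ r, ∑ y, ∑ c, ψ r x y c * star (ψ r x' y c) = α x x') :
    vnEntropy τ + vnEntropy β ≤ vnEntropy α + vnEntropy κ := by
  let M : Matrix (R × Y) (A × C) ℂ := fun ry xc => ψ ry.1 xc.1 ry.2 xc.2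
  have hM : M * Mᴴ = τ ⊗ₖ β := by
    ext ⟨r, y⟩ ⟨r', y'⟩
    rw [kroneckerMap_apply, ← h1, Matrix.mul_apply, Fintype.sum_prod_type]
    rfl
  have hH := Matrix.isHermitian_mul_conjTranspose_self M
  rw [hM] at hH
  have hτH : τ.IsHermitian := by
    ext r r'
    have : ∀ r r', τ r r' = ∑ y, (τ ⊗ₖ β) (r, y) (r', y) := by
      intro r r'
      simp only [kroneckerMap_apply, ← Finset.mul_sum]
      have : ∑ i, β i i = 1 := hβ
      rw [this, mul_one]
    rw [conjTranspose_apply, this, this, star_sum]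
    exact Finset.sum_congr rfl fun j _ => hH.apply _ _
  have hβH : β.IsHermitian := by
    ext r r'
    have : ∀ r r', β r r' = ∑ y, (τ ⊗ₖ β) (y, r) (y, r') := by
      intro r r'
      simp only [kroneckerMap_apply, ← Finset.sum_mul]
      have : ∑ i, τ i i = 1 := hτ
      rw [this, one_mul]
    rw [conjTranspose_apply, this, this, star_sum]
    exact Finset.sum_congr rfl fun j _ => hH.apply _ _
  have hP : (Mᴴ * M).PosSemidef := Matrix.posSemidef_conjTranspose_mul_self M
  have ht : (Mᴴ * M)ᵀ.trace = 1 := by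
    rw [Matrix.trace_transpose, Matrix.trace_mul_comm, hM, trace_kronecker, hτ, hβ, one_mul]
  have hE : ∀ x c x' c', (Mᴴ * M)ᵀ (x, c) (x', c') =
      ∑ r, ∑ y, ψ r x y c * star (ψ r x' y c') := by
    intro x c x' c'
    rw [transpose_apply, Matrix.mul_apply, Fintype.sum_prod_type]
    exact Finset.sum_congr rfl fun r _ => Finset.sum_congr rfl fun r _ => mul_comm _ _
  rw [← qss_kron τ β hτH hβH hτ hβ, ← hM, qss_vnEntropy_mul_comm,
    ← qss_vnEntropy_transpose hP.1]
  refine qss_subadd _ hP.transpose ht α κ ?_ ?_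
  · intro x x'
    simp only [hE]
    rw [← h3]
    conv_rhs => rw [Finset.sum_comm]
    refine Finset.sum_congr rfl fun r _ => ?_
    conv_rhs => rw [Finset.sum_comm]
  · intro x x'
    simp only [hE]
    rw [← h2]
    conv_rhs => rw [Finset.sum_comm]
    refine Finset.sum_congr rfl fun r _ => ?_
    conv_rhs => rw [Finset.sum_comm]

theorem qss_core {R A Y C : Type*} [Fintype R] [DecidableEq R] [Fintype A] [DecidableEq A]
    [Fintype Y] [DecidableEq Y] [Fintype C] [DecidableEq C]
    (ψ : R → A → Y → C → ℂ) (τ : Matrix R R ℂ) (β : Matrix Y Y ℂ) (κ : Matrix C C ℂ)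
    (α : Matrix A A ℂ)
    (hτ : τ.trace = 1) (hβ : β.trace = 1) (hκ : κ.trace = 1)
    (h1 : ∀ r r' y y', ∑ x, ∑ c, ψ r x y c * star (ψ r' x y' c) = τ r r' * β y y')
    (h2 : ∀ r r' c c', ∑ x, ∑ y, ψ r x y c * star (ψ r' x y c') = τ r r' * κ c c')
    (h3 : ∀ x x', ∑ r, ∑ y, ∑ c, ψ r x y c * star (ψ r x' y c) = α x x') :
    vnEntropy τ ≤ vnEntropy α := by
  have hτ' : ∑ i, τ i i = 1 := hτ
  have a := qss_half ψ τ β κ α hτ hβ h1 (by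
    intro c c'
    calc _ = ∑ r, τ r r * κ c c' := by
          refine Finset.sum_congr rfl fun r _ => ?_
          rw [← h2, Finset.sum_comm]
      _ = _ := by rw [← Finset.sum_mul, hτ', one_mul]) h3
  have b := qss_half (fun r x c y => ψ r x y c) τ κ β α hτ hκ h2 (by
    intro c c'
    calc _ = ∑ r, τ r r * β c c' := by
          refine Finset.sum_congr rfl fun r _ => ?_
          rw [← h1, Finset.sum_comm]
      _ = _ := by rw [← Finset.sum_mul, hτ', one_mul]) (by
    intro x x'
    rw [← h3]
    exact Finset.sum_congr rfl fun r _ => Finset.sum_comm)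
  linarith

/-- Knill–Laflamme: Kraus operators of the identity channel are scalar. -/
theorem qss_scalar {H m : Type*} [Fintype H] [DecidableEq H] [Fintype m]
    (M : m → Matrix H H ℂ)
    (h : ∀ ρ : Matrix H H ℂ, ρ.PosSemidef → ∑ j, M j * ρ * (M j)ᴴ = ρ) (j : m) :
    ∃ c : ℂ, M j = c • (1 : Matrix H H ℂ) := by
  have key : ∀ v w : H → ℂ, star w ⬝ᵥ v = 0 → star w ⬝ᵥ (M j *ᵥ v) = 0 := by
    intro v w hvw
    have h0 := h (vecMulVec v (star v)) (Matrix.posSemidef_vecMulVec_self_star v)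
    have h1 : ∑ j, (star w ⬝ᵥ (M j *ᵥ v)) * star (star w ⬝ᵥ (M j *ᵥ v)) = 0 := by
      have h2 := congrArg (fun A => star w ⬝ᵥ (A *ᵥ w)) h0
      simp only [Matrix.sum_mulVec, dotProduct_sum] at h2
      have h3 : star w ⬝ᵥ vecMulVec v (star v) *ᵥ w = 0 := by
        rw [vecMulVec_mulVec]
        simp [hvw]
      rw [h3] at h2
      rw [← h2]
      refine Finset.sum_congr rfl fun k _ => ?_
      rw [mul_vecMulVec, vecMulVec_mul, vecMulVec_mulVec]
      have : star v ᵥ* (M k)ᴴ = star (M k *ᵥ v) := (star_mulVec _ _).symm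
      rw [this, star_dotProduct (M k *ᵥ v) w]
      simp [mul_comm]
    have h4 := (Finset.sum_eq_zero_iff_of_nonneg (fun k _ => mul_star_self_nonneg _)).mp h1 j
      (Finset.mem_univ j)
    simpa using h4
  have hoff : ∀ i k, i ≠ k → M j i k = 0 := by
    intro i k hik
    have := key (Pi.single k 1) (Pi.single i 1) (by simp [hik])
    simpa using this
  have hdiag : ∀ i k, M j i i = M j k k := by
    intro i k
    by_cases hik : i = k
    · rw [hik]
    have := key (Pi.single i 1 + Pi.single k 1) (Pi.single i 1 - Pi.single k 1)
      (by simp [hik, Ne.symm hik])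
    simp [mulVec_add, sub_dotProduct, hoff i k hik, hoff k i (Ne.symm hik)] at this
    linear_combination this
  rcases isEmpty_or_nonempty H with hE | ⟨⟨i0⟩⟩
  · exact ⟨0, Matrix.ext fun i => (hE.false i).elim⟩
  · refine ⟨M j i0 i0, ?_⟩
    ext i k
    by_cases hik : i = k
    · subst hik; simp [hdiag i i0]
    · simp [hik, hoff i k hik]

/-- Linear identities valid on densities extend to PSD matrices. -/
theorem qss_psd_of_density {H V : Type*} [Fintype H] [DecidableEq H] [AddCommGroup V]
    [Module ℂ V] (f g : Matrix H H ℂ →ₗ[ℂ] V) (h : ∀ ρ, IsDensity ρ → f ρ = g ρ)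
    (ρ : Matrix H H ℂ) (hρ : ρ.PosSemidef) : f ρ = g ρ := by
  by_cases h0 : ρ.trace = 0
  · rw [hρ.trace_eq_zero_iff.mp h0, map_zero, map_zero]
  · have hd : IsDensity (ρ.trace⁻¹ • ρ) := by
      refine ⟨hρ.smul ?_, ?_⟩
      · exact inv_nonneg.mpr hρ.trace_nonneg
      · rw [trace_smul, smul_eq_mul, inv_mul_cancel₀ h0]
    have := h _ hd
    rw [map_smul, map_smul] at this
    exact smul_right_injective V (inv_ne_zero h0) this

open scoped Matrix.Norms.L2Operator MatrixOrder in
theorem qss_all_of_density {H V : Type*} [Fintype H] [DecidableEq H] [AddCommGroup V]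
    [Module ℂ V] (f g : Matrix H H ℂ →ₗ[ℂ] V) (h : ∀ ρ, IsDensity ρ → f ρ = g ρ) : f = g := by
  refine LinearMap.ext_on (s := {a : Matrix H H ℂ | 0 ≤ a}) CStarAlgebra.span_nonneg ?_
  intro ρ hρ
  exact qss_psd_of_density f g h ρ (Matrix.nonneg_iff_posSemidef.mp hρ)

theorem qss_exists_sqrt {H : Type*} [Fintype H] [DecidableEq H] (σ : Matrix H H ℂ)
    (h : σ.PosSemidef) : ∃ S : Matrix H H ℂ, σ = S * Sᴴ := by
  obtain ⟨U, h1, h2, hs⟩ := qss_spectral h.1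
  refine ⟨U * diagonal (fun i => (Real.sqrt (h.1.eigenvalues i) : ℂ)), ?_⟩
  rw [conjTranspose_mul, diagonal_conjTranspose, ← mul_assoc, mul_assoc U, diagonal_mul_diagonal]
  conv_lhs => rw [hs]
  congr 3
  ext i
  simp [← Complex.ofReal_mul, Real.mul_self_sqrt (h.eigenvalues_nonneg i)]

end Core

section Glue

/-- Gluing of partial assignments. -/
def qssGlue (P Q T : Fin nn → Prop) [DecidablePred P] (hT : ∀ i, T i ↔ P i ∨ Q i)
    (hd : ∀ i, Q i → ¬ P i) :
    (((i : {i // P i}) → d i) × ((i : {i // Q i}) → d i)) ≃ ((i : {i // T i}) → d i) where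
  toFun fg i := if h : P i then fg.1 ⟨i, h⟩ else fg.2 ⟨i, ((hT i).1 i.2).resolve_left h⟩
  invFun f := (fun i => f ⟨i, (hT i).2 (Or.inl i.2)⟩, fun i => f ⟨i, (hT i).2 (Or.inr i.2)⟩)
  left_inv fg := by
    refine Prod.ext ?_ ?_
    · funext i
      simp [i.2]
    · funext i
      simp [hd i i.2]
  right_inv f := by
    funext i
    by_cases h : P i <;> simp [h]

/-- Partial trace as a linear map. -/
def qssPtr (X : Finset (Fin nn)) :
    Matrix ((i : Fin nn) → d i) ((i : Fin nn) → d i) ℂ →ₗ[ℂ]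
    Matrix ((i : {i // i ∈ X}) → d i) ((i : {i // i ∈ X}) → d i) ℂ where
  toFun := ptraceSubset X
  map_add' M N := by
    ext f g
    simp [ptraceSubset, Finset.sum_add_distrib]
  map_smul' c M := by
    ext f g
    simp [ptraceSubset, Finset.mul_sum]

theorem qss_forbidden_sub
    (W : Matrix H H ℂ →ₗ[ℂ] Matrix ((i : Fin nn) → d i) ((i : Fin nn) → d i) ℂ)
    (Y Z : Finset (Fin nn)) (hZ : Z ⊆ Y) (hF : Forbidden W Y) :
    ∃ β : Matrix ((i : {i // i ∈ Z}) → d i) ((i : {i // i ∈ Z}) → d i) ℂ,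
      β.trace = 1 ∧ ∀ ρ : Matrix H H ℂ, ptraceSubset Z (W ρ) = ρ.trace • β := by
  obtain ⟨ρ₀, hρ₀, hc⟩ := hF
  let e4 := qssGlue (d := d) (fun i => i ∈ Z) (fun i => i ∈ Y ∧ i ∉ Z) (fun i => i ∈ Y)
    (by intro i; have := @hZ i; tauto) (by tauto)
  let e5 := qssGlue (d := d) (fun i => i ∉ Y) (fun i => i ∈ Y ∧ i ∉ Z) (fun i => i ∉ Z)
    (by intro i; have := @hZ i; tauto) (by tauto)
  have hm : ∀ f u q, mergeFun Z f (e5 (u, q)) = mergeFun Y (e4 (f, q)) u := by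
    intro f u q
    funext i
    by_cases h1 : i ∈ Z
    · simp [mergeFun, e4, e5, qssGlue, h1, hZ h1]
    · by_cases h2 : i ∈ Y <;> simp [mergeFun, e4, e5, qssGlue, h1, h2]
  let β : Matrix ((i : {i // i ∈ Z}) → d i) ((i : {i // i ∈ Z}) → d i) ℂ :=
    fun f f' => ∑ q, ρ₀ (e4 (f, q)) (e4 (f', q))
  refine ⟨β, ?_, ?_⟩
  · have h := hρ₀.2
    rw [← h]
    simp only [Matrix.trace, Matrix.diag, β]
    rw [← Equiv.sum_comp e4, Fintype.sum_prod_type]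
  · have hl : (qssPtr Z).comp W = (Matrix.traceLinearMap H ℂ ℂ).smulRight β := by
      apply qss_all_of_density
      intro ρ hρ
      have h1 : (Matrix.traceLinearMap H ℂ ℂ).smulRight β ρ = β := by
        simp [hρ.2]
      rw [h1]
      ext f f'
      change ∑ z, W ρ (mergeFun Z f z) (mergeFun Z f' z) = ∑ q, ρ₀ (e4 (f, q)) (e4 (f', q))
      rw [← hc ρ hρ, ← Equiv.sum_comp e5, Fintype.sum_prod_type, Finset.sum_comm]
      simp only [hm]
      rfl
    intro ρ
    exact congrArg (fun F => F ρ) hl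

theorem qss_KL {A C B : Type*} [Fintype A] [DecidableEq A] [Fintype C] [Fintype B]
    (L : C → Matrix A H ℂ) (R : B → Matrix H A ℂ) (hR : ∑ b, (R b)ᴴ * R b = 1)
    (h : ∀ ρ : Matrix H H ℂ, ρ.PosSemidef →
      ∑ b, R b * (∑ c, L c * ρ * (L c)ᴴ) * (R b)ᴴ = ρ) :
    ∃ κ : Matrix C C ℂ, ∀ c c', (L c')ᴴ * L c = κ c c' • (1 : Matrix H H ℂ) := by
  have hs := qss_scalar (fun bc : B × C => R bc.1 * L bc.2) (by
    intro ρ hρ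
    conv_rhs => rw [← h ρ hρ]
    rw [Fintype.sum_prod_type]
    refine Finset.sum_congr rfl fun b _ => ?_
    rw [Matrix.mul_sum, Matrix.sum_mul]
    refine Finset.sum_congr rfl fun c _ => ?_
    simp only [conjTranspose_mul, Matrix.mul_assoc])
  choose l hl using hs
  refine ⟨fun c c' => ∑ b, star (l (b, c')) * l (b, c), fun c c' => ?_⟩
  calc (L c')ᴴ * L c = (L c')ᴴ * (∑ b, (R b)ᴴ * R b) * L c := by rw [hR, Matrix.mul_one]
    _ = ∑ b, (R b * L c')ᴴ * (R b * L c) := by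
        rw [Matrix.mul_sum, Matrix.sum_mul]
        refine Finset.sum_congr rfl fun c _ => ?_
        simp only [conjTranspose_mul, Matrix.mul_assoc]
    _ = _ := by
        rw [Finset.sum_smul]
        refine Finset.sum_congr rfl fun b _ => ?_
        have h1 := hl (b, c)
        have h2 := hl (b, c')
        simp only at h1 h2
        rw [h1, h2, conjTranspose_smul, conjTranspose_one, smul_mul_smul_comm, Matrix.one_mul]

theorem qss_main
    (W : Matrix H H ℂ →ₗ[ℂ] Matrix ((i : Fin nn) → d i) ((i : Fin nn) → d i) ℂ)
    (hW : IsCPTP W) (X Y : Finset (Fin nn)) (hF : Forbidden W Y) (hQ : Qualified W (X ∪ Y))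
    (σ : Matrix H H ℂ) (hσ : IsDensity σ) :
    vnEntropy σ ≤ vnEntropy (ptraceSubset X (W σ)) := by
  obtain ⟨β, hβ, hβW⟩ := qss_forbidden_sub W Y (Y \ X) Finset.sdiff_subset hF
  obtain ⟨N, K, hK, hK1⟩ := hW
  obtain ⟨Rec, ⟨NR, R, hR, hR1⟩, hRW⟩ := hQ
  obtain ⟨S, hS⟩ := qss_exists_sqrt σ hσ.1
  have hne : Nonempty H := by
    by_contra hE
    rw [not_nonempty_iff] at hE
    have := hσ.2
    simp [Matrix.trace] at this
  let e1 := qssGlue (d := d) (fun i => i ∈ X) (fun i => i ∉ X ∪ Y) (fun i => i ∉ Y \ X)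
    (by intro i; simp only [Finset.mem_union, Finset.mem_sdiff]; tauto)
    (by intro i; simp only [Finset.mem_union]; tauto)
  let e2 := qssGlue (d := d) (fun i => i ∈ Y \ X) (fun i => i ∉ X ∪ Y) (fun i => i ∉ X)
    (by intro i; simp only [Finset.mem_union, Finset.mem_sdiff]; tauto)
    (by intro i; simp only [Finset.mem_union, Finset.mem_sdiff]; tauto)
  let e3 := qssGlue (d := d) (fun i => i ∈ X) (fun i => i ∈ Y \ X) (fun i => i ∈ X ∪ Y)
    (by intro i; simp only [Finset.mem_union, Finset.mem_sdiff]; tauto)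
    (by intro i; simp only [Finset.mem_sdiff]; tauto)
  have hm1 : ∀ x y c, mergeFun (Y \ X) y (e1 (x, c)) = mergeFun (X ∪ Y) (e3 (x, y)) c := by
    intro x y c
    funext i
    by_cases h1 : i ∈ X <;> by_cases h2 : i ∈ Y <;>
      simp [mergeFun, e1, e3, qssGlue, h1, h2]
  have hm2 : ∀ x y c, mergeFun X x (e2 (y, c)) = mergeFun (X ∪ Y) (e3 (x, y)) c := by
    intro x y c
    funext i
    by_cases h1 : i ∈ X <;> by_cases h2 : i ∈ Y <;>
      simp [mergeFun, e2, e3, qssGlue, h1, h2]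
  let L : (((i : {i // i ∉ X ∪ Y}) → d i) × Fin N) →
      Matrix ((i : {i // i ∈ X ∪ Y}) → d i) H ℂ :=
    fun ce f h => K ce.2 (mergeFun (X ∪ Y) f ce.1) h
  have hLW : ∀ ρ, ptraceSubset (X ∪ Y) (W ρ) = ∑ ce, L ce * ρ * (L ce)ᴴ := by
    intro ρ
    ext f f'
    rw [hK, Matrix.sum_apply, Fintype.sum_prod_type]
    refine Finset.sum_congr rfl fun c _ => ?_
    rw [Matrix.sum_apply]
    rfl
  obtain ⟨κ, hκ⟩ := qss_KL L R hR1 (by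
    intro ρ hρ
    have := qss_psd_of_density (Rec.comp ((qssPtr (X ∪ Y)).comp W)) LinearMap.id hRW ρ hρ
    change Rec (ptraceSubset (X ∪ Y) (W ρ)) = ρ at this
    rw [hR, hLW] at this
    exact this)
  have hL1 : ∑ ce, (L ce)ᴴ * L ce = 1 := by
    rw [← hK1, Fintype.sum_prod_type, Finset.sum_comm]
    refine Finset.sum_congr rfl fun e _ => ?_
    ext h h'
    rw [Matrix.sum_apply, Matrix.mul_apply]
    let e : (((i : {i // i ∈ X ∪ Y}) → d i) × ((i : {i // i ∉ X ∪ Y}) → d i)) ≃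
        ((i : Fin nn) → d i) :=
      { toFun := fun q => mergeFun (X ∪ Y) q.1 q.2
        invFun := fun f => (fun i => f i, fun i => f i)
        left_inv := by
          intro q
          refine Prod.ext ?_ ?_
          · funext i
            simp only [mergeFun, dif_pos i.2]
          · funext i
            simp only [mergeFun, dif_neg i.2]
        right_inv := by
          intro f
          funext i
          simp [mergeFun] }
    rw [← Equiv.sum_comp e, Fintype.sum_prod_type, Finset.sum_comm]
    rfl
  have hκ1 : κ.trace = 1 := by
    obtain ⟨h0⟩ := hne
    simp only [hκ, ← Finset.sum_smul] at hL1
    have := congrFun (congrFun hL1 h0) h0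
    simpa [Matrix.trace] using this
  have hWe : ∀ r r' i j, W (S * Matrix.single r r' (1 : ℂ) * Sᴴ) i j =
      ∑ e, (K e * S) i r * star ((K e * S) j r') := by
    intro r r' i j
    rw [hK, Matrix.sum_apply]
    refine Finset.sum_congr rfl fun e _ => ?_
    have : K e * (S * Matrix.single r r' (1 : ℂ) * Sᴴ) * (K e)ᴴ =
        (K e * S) * Matrix.single r r' (1 : ℂ) * (K e * S)ᴴ := by
      simp only [conjTranspose_mul, Matrix.mul_assoc]
    rw [this, Matrix.mul_apply, Finset.sum_eq_single r']
    · simp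
    · intro b _ hb
      rw [Matrix.mul_single_apply_of_ne (hbj := hb), zero_mul]
    · simp
  have hτH := Matrix.isHermitian_conjTranspose_mul_self S
  have hent : vnEntropy σ = vnEntropy (Sᴴ * S)ᵀ := by
    rw [qss_vnEntropy_transpose hτH, hS, qss_vnEntropy_mul_comm]
  rw [hent]
  refine qss_core (fun r x y (ce : ((i : {i // i ∉ X ∪ Y}) → d i) × Fin N) =>
    (K ce.2 * S) (mergeFun (X ∪ Y) (e3 (x, y)) ce.1) r) _ β κ _ ?_ hβ hκ1 ?_ ?_ ?_
  · rw [Matrix.trace_transpose, Matrix.trace_mul_comm, ← hS, hσ.2]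
  · intro r r' y y'
    have h1 := congrFun (congrFun (hβW (S * Matrix.single r r' (1 : ℂ) * Sᴴ)) y) y'
    have h2 : (S * Matrix.single r r' (1 : ℂ) * Sᴴ).trace = (Sᴴ * S)ᵀ r r' := by
      rw [Matrix.mul_assoc, Matrix.trace_mul_comm, Matrix.mul_assoc, transpose_apply,
        Matrix.trace_single_mul]
      simp
    rw [h2, Matrix.smul_apply, smul_eq_mul] at h1
    rw [← h1]
    change _ = ∑ z, W _ (mergeFun (Y \ X) y z) (mergeFun (Y \ X) y' z)
    rw [← Equiv.sum_comp e1, Fintype.sum_prod_type]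
    refine Finset.sum_congr rfl fun x _ => ?_
    rw [Fintype.sum_prod_type]
    refine Finset.sum_congr rfl fun c _ => ?_
    rw [hWe, hm1, hm1]
  · intro r r' c c'
    have h1 : (Sᴴ * ((L c')ᴴ * L c) * S) r' r = (Sᴴ * S)ᵀ r r' * κ c c' := by
      rw [hκ]
      simp [mul_comm]
    have h2 : Sᴴ * ((L c')ᴴ * L c) * S = (L c' * S)ᴴ * (L c * S) := by
      simp only [conjTranspose_mul, Matrix.mul_assoc]
    rw [← h1, h2, Matrix.mul_apply, ← Equiv.sum_comp e3, Fintype.sum_prod_type]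
    exact Finset.sum_congr rfl fun x _ => Finset.sum_congr rfl fun y _ => mul_comm _ _
  · intro x x'
    change _ = ∑ z, W σ (mergeFun X x z) (mergeFun X x' z)
    rw [← Equiv.sum_comp e2, Fintype.sum_prod_type, Finset.sum_comm]
    refine Finset.sum_congr rfl fun y _ => ?_
    simp only [Fintype.sum_prod_type]
    rw [Finset.sum_comm]
    refine Finset.sum_congr rfl fun c _ => ?_
    rw [hm2, hm2, hK, Matrix.sum_apply, Finset.sum_comm]
    refine Finset.sum_congr rfl fun e _ => ?_
    have : K e * σ * (K e)ᴴ = (K e * S) * (K e * S)ᴴ := by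
      rw [hS]; simp only [conjTranspose_mul, Matrix.mul_assoc]
    rw [this, Matrix.mul_apply]
    rfl

end Glue

/-- For any QSS scheme `W_N` (a CPTP, globally reversible encoding) and any significant
set `X` (there is a forbidden `Y` with `X ∪ Y` qualified), and every (finitely
supported) probability measure `μ = (p, ρs)` on pure states with barycenter `σ_μ`:
`H(σ_μ) ≤ H(W_X(σ_μ))`. -/
theorem stmt_16
    (W : Matrix H H ℂ →ₗ[ℂ] Matrix ((i : Fin nn) → d i) ((i : Fin nn) → d i) ℂ)
    (hW : IsCPTP W) (hrev : Qualified W Finset.univ)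
    (X : Finset (Fin nn))
    (hsig : ∃ Y : Finset (Fin nn), Forbidden W Y ∧ Qualified W (X ∪ Y))
    {ι : Type*} [Fintype ι] (p : ι → ℝ) (hp : ∀ i, 0 ≤ p i) (hp1 : ∑ i, p i = 1)
    (ρs : ι → Matrix H H ℂ) (hρs : ∀ i, IsPure (ρs i)) :
    vnEntropy (∑ j, p j • ρs j) ≤ vnEntropy (ptraceSubset X (W (∑ j, p j • ρs j))) := by
  obtain ⟨Y, hF, hQ⟩ := hsig
  refine qss_main W hW X Y hF hQ _ ⟨?_, ?_⟩
  · refine Matrix.posSemidef_sum _ fun j _ => ?_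
    exact (hρs j).1.1.smul (hp j)
  · rw [Matrix.trace_sum]
    have : ∀ j, (p j • ρs j).trace = ((p j : ℝ) : ℂ) := by
      intro j
      rw [Matrix.trace_smul, (hρs j).1.2]
      simp
    simp only [this]
    rw [← Complex.ofReal_sum, hp1, Complex.ofReal_one]
end
end

section
/- For any quantum secret sharing scheme W_N and any significant share i ∈ N (a share i such that {i} ∪ Y is qualified for some forbidden set Y), the dimension of the share system is at least the dimension of the secret: dim H ≤ dim H_i. -/
open Matrix
open scoped ComplexOrder

noncomputable section

variable {nn : ℕ} {d : Fin nn → Type} [∀ i, Fintype (d i)] [∀ i, DecidableEq (d i)]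
variable {H : Type} [Fintype H] [DecidableEq H]

section helpers

theorem aux_polar {H V : Type*} [Fintype H] [DecidableEq H] [AddCommGroup V] [Module ℂ V]
    (g : Matrix H H ℂ →ₗ[ℂ] V) (hg : ∀ ρ, IsDensity ρ → g ρ = 0) (M : Matrix H H ℂ) : g M = 0 := by
  have hp : ∀ ρ : Matrix H H ℂ, ρ.PosSemidef → g ρ = 0 := by
    intro ρ hρ
    by_cases ht : ρ.trace = 0
    · rw [hρ.trace_eq_zero_iff.mp ht, map_zero]
    · have h1 := hg (ρ.trace⁻¹ • ρ) ⟨hρ.smul (inv_nonneg.mpr hρ.trace_nonneg), by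
        rw [trace_smul, smul_eq_mul, inv_mul_cancel₀ ht]⟩
      rw [map_smul] at h1
      exact (smul_eq_zero.mp h1).resolve_left (inv_ne_zero ht)
  have hv : ∀ x : H → ℂ, g (vecMulVec x (star x)) = 0 := fun x =>
    hp _ (posSemidef_vecMulVec_self_star x)
  have hs : ∀ i j : H, g (single i j 1) = 0 := by
    intro i j
    have key : (single i j 1 : Matrix H H ℂ) = (1/4 : ℂ) • (
        vecMulVec (Pi.single i 1 + Pi.single j 1) (star (Pi.single i 1 + Pi.single j 1))
        - vecMulVec (Pi.single i 1 - Pi.single j 1) (star (Pi.single i 1 - Pi.single j 1))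
        + Complex.I • vecMulVec (Pi.single i 1 + Complex.I • Pi.single j 1)
            (star (Pi.single i 1 + Complex.I • Pi.single j 1))
        - Complex.I • vecMulVec (Pi.single i 1 - Complex.I • Pi.single j 1)
            (star (Pi.single i 1 - Complex.I • Pi.single j 1))) := by
      have hsg : ∀ k : H, star (Pi.single k (1:ℂ) : H → ℂ) = Pi.single k 1 := by
        intro k; rw [← Pi.single_star, star_one]
      have hs1 : (single i j 1 : Matrix H H ℂ) = vecMulVec (Pi.single i 1) (Pi.single j 1) := by
        rw [single_eq_single_vecMulVec_single]
      rw [hs1]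
      ext p q
      simp only [star_add, star_sub, star_smul, hsg, vecMulVec_apply, Matrix.smul_apply,
        Matrix.add_apply, Matrix.sub_apply, Pi.add_apply, Pi.sub_apply, Pi.smul_apply, smul_eq_mul,
        Complex.star_def, Complex.conj_I]
      generalize (Pi.single i 1 : H → ℂ) p = a
      generalize (Pi.single j 1 : H → ℂ) p = b
      generalize (Pi.single i 1 : H → ℂ) q = c
      generalize (Pi.single j 1 : H → ℂ) q = e
      linear_combination (1/2 * a * e - 1/2 * b * c) * Complex.I_sq
    rw [key]
    simp only [map_smul, map_add, map_sub, hv, smul_zero, add_zero, sub_zero]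
  rw [matrix_eq_sum_single M, map_sum]
  refine Finset.sum_eq_zero fun i _ => ?_
  rw [map_sum]
  refine Finset.sum_eq_zero fun j _ => ?_
  have : single i j (M i j) = M i j • (single i j 1 : Matrix H H ℂ) := by
    rw [smul_single, smul_eq_mul, mul_one]
  rw [this, map_smul, hs, smul_zero]

/-- Matrix unit. -/
abbrev auxE {H : Type*} [DecidableEq H] (i j : H) : Matrix H H ℂ := single i j 1

theorem aux_fid {H : Type*} [Fintype H] [DecidableEq H] (L : Matrix H H ℂ) :
    ∑ i : H, ∑ j : H, (L * auxE i j * Lᴴ) i j = ((‖L.trace‖ ^ 2 : ℝ) : ℂ) := by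
  have h : ∀ i j : H, (L * auxE i j * Lᴴ) i j = L i i * star (L j j) := by
    intro i j
    rw [Matrix.mul_apply, Finset.sum_eq_single j]
    · rw [mul_single_apply_same, mul_one, conjTranspose_apply]
    · intro b _ hb
      rw [mul_single_apply_of_ne _ _ _ _ _ hb, zero_mul]
    · simp
  simp_rw [h]
  rw [Complex.ofReal_pow, ← Complex.mul_conj', ← Finset.sum_mul_sum, ← star_sum]
  rfl

theorem aux_fid_sum {H τ : Type*} [Fintype H] [DecidableEq H] [Fintype τ]
    (L : τ → Matrix H H ℂ) (E : Matrix H H ℂ → Matrix H H ℂ)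
    (hE : ∀ M, ∑ t, L t * M * (L t)ᴴ = E M) :
    ((∑ t, ‖(L t).trace‖ ^ 2 : ℝ) : ℂ) = ∑ i, ∑ j, E (auxE i j) i j := by
  simp_rw [← hE, Matrix.sum_apply, Complex.ofReal_sum, ← aux_fid]
  rw [Finset.sum_comm]
  exact Finset.sum_congr rfl fun i _ => Finset.sum_comm

theorem aux_core {H A B ι κ : Type*} [Fintype H] [DecidableEq H] [Fintype A] [DecidableEq A]
    [Fintype B] [DecidableEq B] [Fintype ι] [Fintype κ]
    (K : ι → Matrix (A × B) H ℂ) (R : κ → Matrix H (A × B) ℂ) (σ : Matrix B B ℂ)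
    (h1 : ∀ M : Matrix H H ℂ, ∑ b, R b * (∑ a, K a * M * (K a)ᴴ) * (R b)ᴴ = M)
    (h2 : ∑ b, (R b)ᴴ * R b = 1)
    (h3 : ∀ (i j : H) (b b' : B), ∑ x, (∑ a, K a * auxE i j * (K a)ᴴ) (x, b) (x, b')
      = if i = j then σ b b' else 0)
    (hσ : σ.trace = 1) : Fintype.card H ≤ Fintype.card A := by
  let P : A → A → Matrix (A × B) (A × B) ℂ := fun x y =>
    Matrix.of fun s t => if s.1 = x ∧ t.1 = y ∧ s.2 = t.2 then 1 else 0
  -- fidelity of the identity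
  have e1 : (∑ b, ∑ a, ‖(R b * K a).trace‖ ^ 2 : ℝ) = (Fintype.card H : ℝ) ^ 2 := by
    have : ((∑ b, ∑ a, ‖(R b * K a).trace‖ ^ 2 : ℝ) : ℂ) = (Fintype.card H : ℂ) ^ 2 := by
      have h := aux_fid_sum (fun t : κ × ι => R t.1 * K t.2) (fun M => M) (by
        intro M
        conv_rhs => rw [← h1 M]
        rw [Fintype.sum_prod_type]
        simp only [Matrix.mul_sum, Matrix.sum_mul, Matrix.mul_assoc, conjTranspose_mul])
      rw [Fintype.sum_prod_type] at h
      rw [h]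
      simp [sq]
    exact_mod_cast this
  have hPM : ∀ M : Matrix (A × B) (A × B) ℂ, ∀ s t, (∑ x, ∑ y, P x y * M * (P x y)ᴴ) s t
      = if s.1 = t.1 then ∑ y, M (y, s.2) (y, t.2) else 0 := by
    rintro M ⟨s1, s2⟩ ⟨t1, t2⟩
    have hPl : ∀ x y (N : Matrix (A × B) (A × B) ℂ) s t, (P x y * N) s t
        = if s.1 = x then N (y, s.2) t else 0 := by
      rintro x y N ⟨s1, s2⟩ t
      rw [Matrix.mul_apply, Fintype.sum_prod_type]
      simp only [P, Matrix.of_apply, ite_mul, one_mul, zero_mul]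
      by_cases h : s1 = x <;> simp [h, ite_and]
    have hPr : ∀ x y (N : Matrix (A × B) (A × B) ℂ) s t, (N * (P x y)ᴴ) s t
        = if t.1 = x then N s (y, t.2) else 0 := by
      rintro x y N s ⟨t1, t2⟩
      rw [Matrix.mul_apply, Fintype.sum_prod_type]
      simp only [P, Matrix.of_apply, conjTranspose_apply, apply_ite star, star_one, star_zero,
        mul_ite, mul_one, mul_zero]
      by_cases h : t1 = x <;> simp [h, ite_and]
    simp_rw [Matrix.sum_apply, hPr, hPl]
    by_cases h : s1 = t1
    · subst h
      rw [Finset.sum_eq_single s1]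
      · simp
      · intro b _ hb
        simp [hb.symm]
      · simp
    · simp only [if_neg h]
      refine Finset.sum_eq_zero fun x _ => ?_
      by_cases h' : t1 = x
      · subst h'; simp [h]
      · simp [h']
  have e2 : (∑ b, ∑ x, ∑ y, ∑ a, ‖(R b * P x y * K a).trace‖ ^ 2 : ℝ) = (Fintype.card A : ℝ) := by
    have : ((∑ b, ∑ x, ∑ y, ∑ a, ‖(R b * P x y * K a).trace‖ ^ 2 : ℝ) : ℂ)
        = (Fintype.card A : ℂ) := by
      have h := aux_fid_sum (fun t : κ × A × A × ι => R t.1 * P t.2.1 t.2.2.1 * K t.2.2.2)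
        (fun M => ∑ b, R b * (∑ x, ∑ y, P x y * (∑ a, K a * M * (K a)ᴴ)
                * (P x y)ᴴ) * (R b)ᴴ) (by
        intro M
        simp only [Fintype.sum_prod_type]
        simp only [Matrix.mul_sum, Matrix.sum_mul, Matrix.mul_assoc, conjTranspose_mul])
      simp only [Fintype.sum_prod_type] at h
      rw [h]
      let Q : Matrix (A × B) (A × B) ℂ := Matrix.of fun s t => if s.1 = t.1 then σ s.2 t.2 else 0
      have hQ : ∀ i j : H, (∑ x, ∑ y, P x y * (∑ a, K a * auxE i j * (K a)ᴴ) * (P x y)ᴴ)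
          = if i = j then Q else 0 := by
        intro i j
        ext s t
        rw [hPM, h3]
        by_cases h : i = j <;> simp [h, Q]
      calc _ = ∑ i, (∑ b, R b * Q * (R b)ᴴ) i i := by
            simp_rw [hQ]
            refine Finset.sum_congr rfl fun i _ => ?_
            rw [Finset.sum_eq_single i]
            · simp
            · intro j _ hj
              simp [hj.symm]
            · simp
        _ = (Q * ∑ b, (R b)ᴴ * R b).trace := by
            change (∑ b, R b * Q * (R b)ᴴ).trace = _
            rw [Matrix.mul_sum, trace_sum, trace_sum]
            refine Finset.sum_congr rfl fun b _ => ?_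
            rw [Matrix.mul_assoc, Matrix.trace_mul_comm, Matrix.mul_assoc]
        _ = _ := by
            rw [h2, Matrix.mul_one]
            simp only [Matrix.trace, Matrix.diag, Q, Matrix.of_apply, if_true,
              Fintype.sum_prod_type]
            simp only [Matrix.trace, Matrix.diag] at hσ
            simp [hσ]
    exact_mod_cast this
  have e3 : ∀ b a, ‖(R b * K a).trace‖ ^ 2 ≤
      (Fintype.card A : ℝ) * ∑ x, ∑ y, ‖(R b * P x y * K a).trace‖ ^ 2 := by
    intro b a
    have hP : ∑ x, P x x = 1 := by
      ext ⟨s1, s2⟩ ⟨t1, t2⟩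
      simp only [Matrix.sum_apply, P, Matrix.of_apply, Matrix.one_apply, Prod.mk.injEq]
      simp only [ite_and, Finset.sum_ite_eq, Finset.mem_univ, if_true]
      simp [eq_comm]
    have hs : (R b * K a).trace = ∑ x, (R b * P x x * K a).trace := by
      rw [← trace_sum, ← Matrix.sum_mul, ← Matrix.mul_sum, hP, Matrix.mul_one]
    calc ‖(R b * K a).trace‖ ^ 2 ≤ (∑ x, ‖(R b * P x x * K a).trace‖) ^ 2 := by
          rw [hs]; gcongr; exact norm_sum_le _ _
      _ ≤ (Fintype.card A : ℝ) * ∑ x, ‖(R b * P x x * K a).trace‖ ^ 2 :=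
          sq_sum_le_card_mul_sum_sq
      _ ≤ _ := by
          gcongr with x _
          exact Finset.single_le_sum (f := fun y => ‖(R b * P x y * K a).trace‖ ^ 2)
            (fun _ _ => by positivity) (Finset.mem_univ x)
  have e4 : (Fintype.card H : ℝ) ^ 2 ≤ (Fintype.card A : ℝ) ^ 2 := by
    rw [← e1, sq (Fintype.card A : ℝ)]
    nth_rewrite 2 [← e2]
    rw [Finset.mul_sum]
    refine Finset.sum_le_sum fun b _ => ?_
    refine (Finset.sum_le_sum fun a _ => e3 b a).trans (le_of_eq ?_)
    rw [← Finset.mul_sum, Finset.sum_comm]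
    congr 1
    exact Finset.sum_congr rfl fun x _ => Finset.sum_comm
  exact_mod_cast (sq_le_sq₀ (Nat.cast_nonneg _) (Nat.cast_nonneg _)).mp e4

/-- The core bound transported to the partial traces of a channel. -/
theorem aux_ptrace {A B : Type*} [Fintype A] [DecidableEq A] [Fintype B] [DecidableEq B]
    (W : Matrix H H ℂ →ₗ[ℂ] Matrix ((i : Fin nn) → d i) ((i : Fin nn) → d i) ℂ)
    (hW : IsCPTP W) (X : Finset (Fin nn)) (hX : Qualified W X)
    (e : A × B ≃ ((i : {i // i ∈ X}) → d i))
    (σ : Matrix B B ℂ) (hσ : σ.trace = 1)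
    (hB : ∀ ρ, IsDensity ρ → ∀ b b', ∑ x, ptraceSubset X (W ρ) (e (x, b)) (e (x, b')) = σ b b') :
    Fintype.card H ≤ Fintype.card A := by
  obtain ⟨N, K, hK, -⟩ := hW
  obtain ⟨R, ⟨N', L, hL, hL1⟩, hR⟩ := hX
  let K' : ((i : {i // i ∉ X}) → d i) × Fin N → Matrix (A × B) H ℂ := fun za =>
    (K za.2).submatrix (fun p => mergeFun X (e p) za.1) id
  let L' : Fin N' → Matrix H (A × B) ℂ := fun b => (L b).submatrix id e
  have hKE : ∀ M, (∑ a, K' a * M * (K' a)ᴴ) = (ptraceSubset X (W M)).submatrix e e := by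
    intro M
    ext p q
    rw [hK, Matrix.sum_apply, Fintype.sum_prod_type]
    simp only [ptraceSubset, submatrix_apply, Matrix.sum_apply]
    rfl
  let pt : Matrix ((i : Fin nn) → d i) ((i : Fin nn) → d i) ℂ →ₗ[ℂ]
      Matrix ((i : {i // i ∈ X}) → d i) ((i : {i // i ∈ X}) → d i) ℂ :=
    { toFun := ptraceSubset X
      map_add' := by
        intro M M'; ext p q
        simp [ptraceSubset, Finset.sum_add_distrib]
      map_smul' := by
        intro c M; ext p q
        simp [ptraceSubset, Finset.mul_sum] }
  have hR' : ∀ M, R (ptraceSubset X (W M)) = M := by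
    intro M
    have := aux_polar (R ∘ₗ pt ∘ₗ W - LinearMap.id) (fun ρ hρ => sub_eq_zero.mpr (hR ρ hρ)) M
    exact sub_eq_zero.mp this
  refine aux_core K' L' σ ?_ ?_ ?_ hσ
  · intro M
    rw [hKE]
    conv_rhs => rw [← hR' M, hL]
    refine Finset.sum_congr rfl fun b _ => ?_
    simp only [L', conjTranspose_submatrix, submatrix_mul_equiv, submatrix_id_id]
  · simp only [L', conjTranspose_submatrix]
    have : (∑ a, (L a)ᴴ * L a).submatrix e e = 1 := by
      rw [hL1]; simp
    rw [← this]
    ext p q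
    simp only [Matrix.sum_apply, submatrix_apply]
    rfl
  · intro i j b b'
    rw [hKE]
    let f : Matrix H H ℂ →ₗ[ℂ] ℂ :=
      { toFun := fun M => ∑ x, pt (W M) (e (x, b)) (e (x, b')) - M.trace * σ b b'
        map_add' := by
          intro M M'
          simp only [map_add, Matrix.add_apply, Finset.sum_add_distrib, trace_add]; ring
        map_smul' := by
          intro c M
          simp only [map_smul, Matrix.smul_apply, smul_eq_mul, ← Finset.mul_sum, trace_smul,
            RingHom.id_apply]; ring }
    have := aux_polar f (fun ρ hρ => by
      change ∑ x, ptraceSubset X (W ρ) (e (x, b)) (e (x, b')) - ρ.trace * σ b b' = 0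
      rw [hB ρ hρ, hρ.2]; ring) (auxE i j)
    have h := sub_eq_zero.mp this
    refine Eq.trans h ?_
    by_cases hij : i = j
    · subst hij; simp
    · simp [hij, trace_single_eq_of_ne]

/-- Splitting off the coordinate `i` from the shares in `{i} ∪ Y`. -/
def auxEquiv (i : Fin nn) (Y : Finset (Fin nn)) (hi : i ∉ Y) :
    d i × ((j : {j // j ∈ Y}) → d j) ≃ ((j : {j // j ∈ ({i} ∪ Y : Finset (Fin nn))}) → d j) where
  toFun p j := if h : j.1 = i then cast (congrArg d h.symm) p.1 else p.2 ⟨j.1, by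
    have := j.2; simp only [Finset.mem_union, Finset.mem_singleton] at this; tauto⟩
  invFun f := (f ⟨i, by simp⟩, fun j => f ⟨j.1, by simp [j.2]⟩)
  left_inv := by
    rintro ⟨x, g⟩
    refine Prod.ext (by simp) ?_
    funext j
    have : j.1 ≠ i := fun h => hi (h ▸ j.2)
    simp only [this, dite_false]
  right_inv := by
    intro f
    funext ⟨j, hj⟩
    by_cases h : j = i
    · subst h; simp
    · simp [h]

theorem auxEquiv_apply (i : Fin nn) (Y : Finset (Fin nn)) (hi : i ∉ Y)
    (p : d i × ((j : {j // j ∈ Y}) → d j)) (j : {j // j ∈ ({i} ∪ Y : Finset (Fin nn))}) :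
    auxEquiv i Y hi p j = if h : j.1 = i then cast (congrArg d h.symm) p.1 else p.2 ⟨j.1, by
    have := j.2; simp only [Finset.mem_union, Finset.mem_singleton] at this; tauto⟩ := rfl

/-- Splitting off the coordinate `i` from the shares outside `Y`. -/
def auxEquiv2 (i : Fin nn) (Y : Finset (Fin nn)) (hi : i ∉ Y) :
    d i × ((j : {j // j ∉ ({i} ∪ Y : Finset (Fin nn))}) → d j) ≃ ((j : {j // j ∉ Y}) → d j) where
  toFun p j := if h : j.1 = i then cast (congrArg d h.symm) p.1 else p.2 ⟨j.1, by
    have := j.2; simp only [Finset.mem_union, Finset.mem_singleton]; tauto⟩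
  invFun f := (f ⟨i, hi⟩, fun j => f ⟨j.1, fun h => j.2 (by simp [h])⟩)
  left_inv := by
    rintro ⟨x, g⟩
    refine Prod.ext (by simp) ?_
    funext j
    have : j.1 ≠ i := fun h => j.2 (by simp [h])
    simp only [this, dite_false]
  right_inv := by
    intro f
    funext ⟨j, hj⟩
    by_cases h : j = i
    · subst h; simp
    · simp [h]

theorem auxEquiv2_apply (i : Fin nn) (Y : Finset (Fin nn)) (hi : i ∉ Y)
    (p : d i × ((j : {j // j ∉ ({i} ∪ Y : Finset (Fin nn))}) → d j)) (j : {j // j ∉ Y}) :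
    auxEquiv2 i Y hi p j = if h : j.1 = i then cast (congrArg d h.symm) p.1 else p.2 ⟨j.1, by
    have := j.2; simp only [Finset.mem_union, Finset.mem_singleton]; tauto⟩ := rfl

theorem aux_merge (i : Fin nn) (Y : Finset (Fin nn)) (hi : i ∉ Y) (x : d i)
    (g : (j : {j // j ∈ Y}) → d j) (z : (j : {j // j ∉ ({i} ∪ Y : Finset (Fin nn))}) → d j) :
    mergeFun ({i} ∪ Y) (auxEquiv i Y hi (x, g)) z = mergeFun Y g (auxEquiv2 i Y hi (x, z)) := by
  funext j
  by_cases h : j = i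
  · subst h
    simp only [mergeFun, hi, Finset.mem_union, Finset.mem_singleton, true_or, dite_true, dite_false, not_false_eq_true]
    rw [auxEquiv_apply, auxEquiv2_apply, dif_pos rfl, dif_pos rfl]
  · by_cases hj : j ∈ Y
    · simp only [mergeFun, h, hj, Finset.mem_union, or_true, dite_true]
      rw [auxEquiv_apply, dif_neg h]
    · simp only [mergeFun, h, hj, Finset.mem_union, Finset.mem_singleton, or_self, dite_false]
      rw [auxEquiv2_apply, dif_neg h]

end helpers

/-- For any QSS scheme `W_N` and any significant share `i` (i.e. `{i} ∪ Y` is qualified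
for some forbidden set `Y`), the dimension of the share system is at least the
dimension of the secret: `dim H ≤ dim H_i`. -/
theorem stmt_17
    (W : Matrix H H ℂ →ₗ[ℂ] Matrix ((i : Fin nn) → d i) ((i : Fin nn) → d i) ℂ)
    (hW : IsCPTP W) (hrev : Qualified W Finset.univ)
    (i : Fin nn)
    (hsig : ∃ Y : Finset (Fin nn), Forbidden W Y ∧ Qualified W ({i} ∪ Y)) :
    Fintype.card H ≤ Fintype.card (d i) := by
  classical
  obtain ⟨Y, ⟨σ, hσ, hY⟩, hQ⟩ := hsig
  by_cases hi : i ∈ Y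
  · have hX : {i} ∪ Y = Y := by
      rw [Finset.union_eq_right]; simpa using hi
    rw [hX] at hQ
    have h1 : Fintype.card H ≤ Fintype.card Unit :=
      aux_ptrace W hW Y hQ (Equiv.punitProd _) σ hσ.2 (by
        intro ρ hρ b b'
        simp [hY ρ hρ])
    have hne : Nonempty (d i) := by
      by_contra hcon
      have hem : IsEmpty ((j : {j // j ∈ Y}) → d j) :=
        ⟨fun f => hcon ⟨f ⟨i, hi⟩⟩⟩
      have := hσ.2
      simp [Matrix.trace] at this
    exact h1.trans Fintype.card_pos
  · refine aux_ptrace W hW _ hQ (auxEquiv i Y hi) σ hσ.2 ?_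
    intro ρ hρ b b'
    rw [← hY ρ hρ]
    simp only [ptraceSubset, aux_merge]
    rw [← Fintype.sum_prod_type', ← Equiv.sum_comp (auxEquiv2 i Y hi)]
end
end
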